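/- arXiv:1910.12098 — 2 statements merged into one kernel-verified Lean document; each statement's English description precedes it below -/
import Mathlib

section
/- Fix a real number r ≥ 1 and ν > −1. For s > 0 and ζ in the arc A, define Ψ(ζ) := s^ρ · ζ · ∫₀¹ logΓ((1+ν)/2 − i s^ρ t ζ) dt (the integral along the straight segment from 0 to ζ), and set J(s) := i(c₁+c₂) · (2πi)^{−1} ∫_A Ψ(ζ)·(1 − i(Im b₂)/ζ)·(1/r(ζ)) dζ (absolutely convergent). Then J admits the standard divergent expansion with error O(s^{−ρ} ln s) and constant term κ = ((c₁+c₂)/2)·[ (1−3ν²)/24 + ζ′(−1) − logG((ν+1)/2) + ((ν−1)/2)·ln Γ((ν+1)/2) ]·(1 − (Im b₂)/|b₂|) + ((c₁+c₂)/48)·(1−3ν²)·[ (1 + (Im b₂)/|b₂|)·ln((|b₂|+Im b₂)/2) − 2·((Im b₂)/|b₂|)·ln|b₂| ]. -/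
open Complex Filter MeasureTheory

noncomputable section

/-- Principal branch of log-Gamma on `ℂ ∖ (-∞,0]`. -/
def logGammaP (z : ℂ) : ℂ :=
  -(Real.eulerMascheroniConstant : ℂ) * z - Complex.log z +
    ∑' k : ℕ, (z / ((k : ℂ) + 1) - Complex.log (1 + z / ((k : ℂ) + 1)))

/-- Real logarithm of the Barnes `G`-function at `1 + x`, for `x > -1`. -/
def logBarnesG1p (x : ℝ) : ℝ :=
  x / 2 * Real.log (2 * Real.pi) - (x + x ^ 2 * (1 + Real.eulerMascheroniConstant)) / 2 +
    ∑' k : ℕ, (((k : ℝ) + 1) * Real.log (1 + x / ((k : ℝ) + 1)) - x + x ^ 2 / (2 * ((k : ℝ) + 1)))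

/-- `ρ = 1/(1+r)`. -/
def rhoOf (r : ℝ) : ℝ := 1 / (1 + r)

/-- `φ ∈ [0, π/2)` with `sin φ = (r-1)/(r+1)`. -/
def phiOf (r : ℝ) : ℝ := Real.arcsin ((r - 1) / (r + 1))

/-- `|b₂|`, determined by `Re b₂ = 2 r^{(1-r)/(2(1+r))}` and `arg b₂ = φ`. -/
def b2abs (r : ℝ) : ℝ := 2 * r ^ ((1 - r) / (2 * (1 + r))) / Real.cos (phiOf r)

/-- The point `b₂ = |b₂| e^{iφ}`. -/
def b2Of (r : ℝ) : ℂ := (b2abs r : ℂ) * Complex.exp ((phiOf r : ℝ) * Complex.I)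

/-- The point `b₁ = -conj(b₂)`. -/
def b1Of (r : ℝ) : ℂ := -(starRingEnd ℂ) (b2Of r)

/-- Integral along the circular arc `{R e^{iθ} : φ ≤ θ ≤ π - φ}`, oriented counterclockwise. -/
def arcIntegral (R φ : ℝ) (f : ℂ → ℂ) : ℂ :=
  ∫ θ in φ..(Real.pi - φ),
    f ((R : ℂ) * Complex.exp ((θ : ℝ) * Complex.I)) *
      (Complex.I * (R : ℂ) * Complex.exp ((θ : ℝ) * Complex.I))

/-- The branch `r(ζ) = ζ √(1 - 2i (Im b₂)/ζ - |b₂|²/ζ²)` (principal square root). -/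
def rBranch (r : ℝ) (ζ : ℂ) : ℂ :=
  ζ * (1 - 2 * Complex.I * ((b2Of r).im : ℂ) / ζ - ((b2abs r : ℂ)) ^ 2 / ζ ^ 2) ^ ((1 : ℂ) / 2)

/-- `f` admits the standard divergent expansion with constant term `κ` and
error `O(s^{-ρ} ln s)` as `s → +∞`. -/
def HasStdExpansion (ρ : ℝ) (f : ℝ → ℂ) (κ : ℂ) : Prop :=
  ∃ d₁ d₂ d₃ d₄ d₅ d₆ d₇ : ℂ,
    (fun s : ℝ =>
        f s - (d₁ * (s ^ (2 * ρ) : ℝ) * (Real.log s : ℝ) + d₂ * (s ^ (2 * ρ) : ℝ) +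
          d₃ * (s ^ ρ : ℝ) * ((Real.log s : ℝ)) ^ 2 + d₄ * (s ^ ρ : ℝ) * (Real.log s : ℝ) +
          d₅ * (s ^ ρ : ℝ) + d₆ * ((Real.log s : ℝ)) ^ 2 + d₇ * (Real.log s : ℝ) + κ))
      =O[atTop] fun s : ℝ => s ^ (-ρ) * Real.log s

/-- `Ψ(ζ) = s^ρ ζ ∫₀¹ logΓ((1+ν)/2 - i s^ρ t ζ) dt`. -/
def PsiOf (r ν s : ℝ) (ζ : ℂ) : ℂ :=
  ((s ^ rhoOf r : ℝ) : ℂ) * ζ *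
    ∫ t in (0 : ℝ)..1, logGammaP ((((1 + ν) / 2 : ℝ) : ℂ) - Complex.I * (s ^ rhoOf r : ℝ) * (t : ℝ) * ζ)

/-- `J(s) = i(c₁+c₂) (2πi)^{-1} ∫_A Ψ(ζ)(1 - i Im b₂/ζ)(1/r(ζ)) dζ` with `c₁+c₂ = 1+r`. -/
def Jfun (r ν : ℝ) (s : ℝ) : ℂ :=
  Complex.I * ((1 : ℂ) + (r : ℝ)) * (2 * Real.pi * Complex.I)⁻¹ *
    arcIntegral (b2abs r) (phiOf r)
      (fun ζ => PsiOf r ν s ζ * (1 - Complex.I * ((b2Of r).im : ℂ) / ζ) * (rBranch r ζ)⁻¹)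

/-!
On the right half-plane `logΓ` has an explicit antiderivative `P`, so `Ψ(ζ)` is a difference
`P(a + s^ρ u) - P(a)` with `a = (1 + ν) / 2` and `ζ = i u`, and `J` is an arc integral of it.

The value `P(a)` is a combination of `log G(a)` and `log Γ(a)`. For the growth of `P(a + w)`, apply
Euler–Maclaurin summation to the series of `P`; its partial sums involve `∑ n log n`, whose
regularised limit is `1 / 12 - ζ'(-1)`, because the Euler–Maclaurin partial sums of `(s - 1) ζ(s)`
converge locally uniformly on `Re s > -2`.

On the arc, the substitution `θ = π / 2 + 2 arcsin (k sin x)` with `k = √ρ` removes the square root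
in `r(ζ)` and turns the form `(1 - i Im b₂ / ζ) dζ / r(ζ)` into a density `m(x) i dx`. In the
integrated Stirling expansion, the constant term only involves the two moments `∫ m = 2 π k²` and
`∫ 2 i arcsin (k sin x) m = (2 - 2 k²) π log (1 - k²)`.
-/

open Asymptotics
open Bornology (cobounded eventually_ne_cobounded)
open scoped Topology Interval

/-! ### Taylor and Euler–Maclaurin bounds -/

lemma mem_slitPlane_one_add {x : ℂ} (hx : -1 < x.re) : 1 + x ∈ slitPlane :=
  Or.inl (by simp only [add_re, one_re]; linarith)

lemma norm_log_one_add_sub_logTaylor_le (n : ℕ) {x : ℂ} (hx : -1 / 2 ≤ x.re) :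
    ‖log (1 + x) - logTaylor (n + 1) x‖ ≤ 2 * ‖x‖ ^ (n + 1) := by
  have half_le {t : ℝ} (ht : t ∈ Set.Icc (0 : ℝ) 1) : 1 / 2 ≤ (1 + (t : ℂ) * x).re := by
    simp only [add_re, one_re, re_ofReal_mul]
    nlinarith [ht.1, ht.2, mul_nonneg ht.1 (by linarith : 0 ≤ x.re + 1 / 2)]
  have hderiv (t : ℝ) (ht : t ∈ Set.Icc (0 : ℝ) 1) : HasDerivAt
      (fun t : ℝ ↦ log (1 + t * x) - logTaylor (n + 1) (t * x))
      ((-(t * x)) ^ n * (1 + t * x)⁻¹ * x) t := by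
    have hlog := hasDerivAt_log_sub_logTaylor n (z := t * x) (Or.inl (by linarith [half_le ht]))
    simpa [Function.comp_def] using hlog.comp t ((hasDerivAt_id t).ofReal_comp.mul_const x)
  have hbound (t : ℝ) (ht : t ∈ Set.Icc (0 : ℝ) 1) :
      ‖(-(t * x)) ^ n * (1 + t * x)⁻¹ * x‖ ≤ 2 * ‖x‖ ^ (n + 1) := by
    have hinv : ‖(1 + t * x)⁻¹‖ ≤ 2 := by
      rw [norm_inv, inv_le_comm₀ (by linarith [half_le ht, re_le_norm (1 + t * x)]) two_pos]
      linarith [half_le ht, re_le_norm (1 + t * x)]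
    have hpow : ‖(-(t * x)) ^ n‖ ≤ ‖x‖ ^ n := by
      rw [norm_pow, norm_neg, norm_mul, Complex.norm_of_nonneg ht.1]
      exact pow_le_pow_left₀ (by have := ht.1; positivity)
        (mul_le_of_le_one_left (norm_nonneg x) ht.2) n
    calc ‖(-(t * x)) ^ n * (1 + t * x)⁻¹ * x‖
        ≤ ‖x‖ ^ n * 2 * ‖x‖ := by rw [norm_mul, norm_mul]; gcongr
      _ = 2 * ‖x‖ ^ (n + 1) := by ring
  simpa [logTaylor_at_zero] using norm_image_sub_le_of_norm_deriv_le_segment_01'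
    (fun t ht ↦ (hderiv t ht).hasDerivWithinAt) (fun t ht ↦ hbound t (Set.Ico_subset_Icc_self ht))

lemma norm_log_one_add_sub_self_le_two_mul {x : ℂ} (hx : -1 / 2 ≤ x.re) :
    ‖log (1 + x) - x‖ ≤ 2 * ‖x‖ ^ 2 := by
  simpa [logTaylor_succ, logTaylor_zero] using norm_log_one_add_sub_logTaylor_le 1 hx

lemma norm_log_one_add_sub_self_add_sq_le {x : ℂ} (hx : -1 / 2 ≤ x.re) :
    ‖log (1 + x) - x + x ^ 2 / 2‖ ≤ 2 * ‖x‖ ^ 3 := by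
  convert norm_log_one_add_sub_logTaylor_le 2 hx using 2
  simp only [Nat.reduceAdd, logTaylor_succ, logTaylor_zero, zero_add, pow_one, pow_zero, mul_one,
    CharP.cast_eq_zero, div_zero, even_two, Even.neg_pow, one_pow, one_mul, Nat.cast_one, div_one,
    Nat.cast_ofNat, Pi.add_apply, add_zero]
  ring

lemma norm_eulerMaclaurin_remainder_le {E : Type*} [NormedAddCommGroup E] [NormedSpace ℝ E]
    {F f f₁ f₂ f₃ : ℝ → E} {K : ℝ}
    (hF : ∀ x ∈ Set.Icc (0 : ℝ) 1, HasDerivAt F (f x) x)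
    (hf : ∀ x ∈ Set.Icc (0 : ℝ) 1, HasDerivAt f (f₁ x) x)
    (hf₁ : ∀ x ∈ Set.Icc (0 : ℝ) 1, HasDerivAt f₁ (f₂ x) x)
    (hf₂ : ∀ x ∈ Set.Icc (0 : ℝ) 1, HasDerivAt f₂ (f₃ x) x)
    (hK : ∀ x ∈ Set.Icc (0 : ℝ) 1, ‖f₃ x‖ ≤ K) :
    ‖(1 / 2 : ℝ) • (f 0 + f 1) - (F 1 - F 0) - (1 / 12 : ℝ) • (f₁ 1 - f₁ 0)‖ ≤ K := by
  -- The weights are `Bⱼ(x) / j!` for the Bernoulli polynomials `Bⱼ`: each has the previous one as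
  -- its derivative.
  let g (x : ℝ) : E := ((x ^ 3 - 3 / 2 * x ^ 2 + 1 / 2 * x) / 6) • f₂ x
    - ((x ^ 2 - x + 1 / 6) / 2) • f₁ x + (x - 1 / 2) • f x - F x
  have hg (x : ℝ) (hx : x ∈ Set.Icc (0 : ℝ) 1) :
      HasDerivAt g (((x ^ 3 - 3 / 2 * x ^ 2 + 1 / 2 * x) / 6) • f₃ x) x := by
    have hid := hasDerivAt_id' x
    have h₂ := ((((hid.pow 3).sub ((hid.pow 2).const_mul (3 / 2))).add
      (hid.const_mul (1 / 2))).div_const 6).smul (hf₂ x hx)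
    have h₁ := ((((hid.pow 2).sub hid).add_const (1 / 6)).div_const 2).smul (hf₁ x hx)
    refine (((h₂.sub h₁).add ((hid.sub_const (1 / 2)).smul (hf x hx))).sub (hF x hx)).congr_deriv ?_
    simp only [Pi.pow_apply, one_div, Pi.add_apply, Pi.sub_apply, Nat.cast_ofNat,
      Nat.add_one_sub_one, mul_one, pow_one, one_smul]
    module
  have hg_bound (x : ℝ) (hx : x ∈ Set.Ico (0 : ℝ) 1) :
      ‖((x ^ 3 - 3 / 2 * x ^ 2 + 1 / 2 * x) / 6) • f₃ x‖ ≤ K := by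
    have hpoly : ‖(x ^ 3 - 3 / 2 * x ^ 2 + 1 / 2 * x) / 6‖ ≤ 1 := by
      have h₂ : x ^ 2 ≤ 1 := pow_le_one₀ hx.1 hx.2.le
      have h₃ : x ^ 3 ≤ 1 := pow_le_one₀ hx.1 hx.2.le
      rw [Real.norm_eq_abs, abs_le]
      constructor <;> linarith [hx.1, hx.2, pow_nonneg hx.1 2, pow_nonneg hx.1 3]
    rw [norm_smul]
    exact (mul_le_of_le_one_left (norm_nonneg _) hpoly).trans (hK x (Set.Ico_subset_Icc_self hx))
  have h := norm_image_sub_le_of_norm_deriv_le_segment_01'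
    (fun x hx ↦ (hg x hx).hasDerivWithinAt) hg_bound
  convert h using 2
  simp only [g]
  module

/-! ### Euler–Maclaurin partial sums of the zeta function -/

/-- The Euler–Maclaurin approximation of `∑ n ≥ x, n ^ (-s)`, multiplied by `s - 1` so that it is
entire in `s`, as in `riemannZeta₁`. -/
def zetaTail (x : ℝ) (s : ℂ) : ℂ :=
  (x : ℂ) ^ (1 - s) + (s - 1) * (x : ℂ) ^ (-s) / 2 + (s - 1) * s * (x : ℂ) ^ (-s - 1) / 12

/-- The Euler–Maclaurin approximation of `riemannZeta₁ s = (s - 1) * ζ s` from `N` terms of the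
Dirichlet series. -/
def zetaPartial (N : ℕ) (s : ℂ) : ℂ :=
  (s - 1) * ∑ n ∈ Finset.range N, ((n : ℂ) + 1) ^ (-s) + zetaTail (N + 1) s

lemma hasDerivAt_const_add_ofReal_cpow (c : ℂ) {a x : ℝ} (h : 0 < a + x) :
    HasDerivAt (fun y : ℝ ↦ ((a + y : ℝ) : ℂ) ^ c) (c * ((a + x : ℝ) : ℂ) ^ (c - 1)) x := by
  have hcpow : HasDerivAt (fun z : ℂ ↦ z ^ c)
      (c * ((a + x : ℝ) : ℂ) ^ (c - 1)) ((a + x : ℝ) : ℂ) := by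
    simpa using (hasDerivAt_id' ((a + x : ℝ) : ℂ)).cpow_const (c := c) (ofReal_mem_slitPlane.2 h)
  exact hcpow.comp_ofReal.comp_const_add a x

lemma norm_zetaPartial_succ_sub_le (N : ℕ) {s : ℂ} (hs : -3 ≤ s.re) :
    ‖zetaPartial (N + 1) s - zetaPartial N s‖ ≤
      ‖(s - 1) * s * (s + 1) * (s + 2)‖ * ((N : ℝ) + 1) ^ (-s.re - 3) := by
  have hpos {x : ℝ} (hx : x ∈ Set.Icc (0 : ℝ) 1) : 0 < ((N : ℝ) + 1) + x := by
    have := hx.1; positivity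
  have hd (c b : ℂ) (x : ℝ) (hx : x ∈ Set.Icc (0 : ℝ) 1) :=
    (hasDerivAt_const_add_ofReal_cpow c (hpos hx)).const_mul b
  have hd₀ (x : ℝ) (hx : x ∈ Set.Icc (0 : ℝ) 1) :
      HasDerivAt (fun y : ℝ ↦ -1 * (((N : ℝ) + 1 + y : ℝ) : ℂ) ^ (1 - s))
        ((s - 1) * (((N : ℝ) + 1 + x : ℝ) : ℂ) ^ (-s)) x := by
    refine (hd (1 - s) (-1) x hx).congr_deriv ?_
    rw [show 1 - s - 1 = -s by ring]
    ring
  have hthird (x : ℝ) (hx : x ∈ Set.Icc (0 : ℝ) 1) :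
      ‖(s - 1) * (-s * ((-s - 1) * ((-s - 1 - 1) *
          (((N : ℝ) + 1 + x : ℝ) : ℂ) ^ (-s - 1 - 1 - 1))))‖
        ≤ ‖(s - 1) * s * (s + 1) * (s + 2)‖ * ((N : ℝ) + 1) ^ (-s.re - 3) := by
    have hcoeff : (s - 1) * (-s * ((-s - 1) * ((-s - 1 - 1) *
        (((N : ℝ) + 1 + x : ℝ) : ℂ) ^ (-s - 1 - 1 - 1)))) =
        -((s - 1) * s * (s + 1) * (s + 2)) * (((N : ℝ) + 1 + x : ℝ) : ℂ) ^ (-s - 3) := by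
      rw [show -s - 1 - 1 - 1 = -s - 3 by ring]
      ring
    rw [hcoeff, norm_mul, norm_neg, norm_cpow_eq_rpow_re_of_pos (hpos hx)]
    gcongr ‖_‖ * ?_
    have hexp : (-s - 3).re = -s.re - 3 := by simp only [sub_re, neg_re, re_ofNat]
    rw [hexp]
    exact Real.rpow_le_rpow_of_nonpos (by positivity) (by linarith [hx.1]) (by linarith)
  have h := norm_eulerMaclaurin_remainder_le hd₀
    (fun x hx ↦ (hd (-s) (s - 1) x hx)) (fun x hx ↦ ((hd _ _ x hx).const_mul _))
    (fun x hx ↦ (((hd _ _ x hx).const_mul _).const_mul _)) hthird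
  refine (congrArg norm ?_).trans_le h
  simp only [zetaPartial, zetaTail, Finset.sum_range_succ, real_smul, ofReal_add, ofReal_natCast,
    ofReal_one, ofReal_div, ofReal_ofNat, Nat.cast_add, Nat.cast_one, add_zero]
  ring

lemma differentiable_zetaPartial (N : ℕ) : Differentiable ℂ (zetaPartial N) := by
  have hne (n : ℕ) : (n : ℂ) + 1 ≠ 0 := Nat.cast_add_one_ne_zero n
  have hcpow (n : ℕ) {c : ℂ → ℂ} (hc : Differentiable ℂ c) :
      Differentiable ℂ (fun s ↦ ((n : ℂ) + 1) ^ c s) :=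
    fun s ↦ (hc s).const_cpow (Or.inl (hne n))
  have (n : ℕ) := hcpow n (c := fun s ↦ -s) (by fun_prop)
  have := hcpow N (c := fun s ↦ 1 - s) (by fun_prop)
  have := hcpow N (c := fun s ↦ -s - 1) (by fun_prop)
  unfold zetaPartial zetaTail
  push_cast
  fun_prop

lemma tendsto_zetaTail {s : ℂ} (hs : 1 < s.re) :
    Tendsto (fun N : ℕ ↦ zetaTail (N + 1) s) atTop (𝓝 0) := by
  have hcpow {c : ℂ} (hc : c.re < 0) :
      Tendsto (fun N : ℕ ↦ (((N : ℝ) + 1 : ℝ) : ℂ) ^ c) atTop (𝓝 0) := by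
    rw [tendsto_zero_iff_norm_tendsto_zero]
    have hnorm (N : ℕ) : ‖(((N : ℝ) + 1 : ℝ) : ℂ) ^ c‖ = ((N : ℝ) + 1) ^ (-(-c.re)) := by
      rw [norm_cpow_eq_rpow_re_of_pos (by positivity), neg_neg]
    simp_rw [hnorm]
    exact (tendsto_rpow_neg_atTop (by linarith)).comp
      (tendsto_atTop_add_const_right _ _ tendsto_natCast_atTop_atTop)
  have h₀ := hcpow (c := 1 - s) (by rw [sub_re, one_re]; linarith)
  have h₁ := ((hcpow (c := -s) (by rw [neg_re]; linarith)).const_mul (s - 1)).div_const 2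
  have h₂ := ((hcpow (c := -s - 1) (by rw [sub_re, neg_re, one_re]; linarith)).const_mul
    ((s - 1) * s)).div_const 12
  simpa [zetaTail] using (h₀.add h₁).add h₂

lemma tendsto_zetaPartial_of_one_lt_re {s : ℂ} (hs : 1 < s.re) :
    Tendsto (fun N ↦ zetaPartial N s) atTop (𝓝 (riemannZeta₁ s)) := by
  have hs₁ : s ≠ 1 := by rintro rfl; simp at hs
  have hsum : Summable fun n : ℕ ↦ ((n : ℂ) + 1) ^ (-s) := by
    simpa [cpow_neg] using (summable_nat_add_iff 1).2 (summable_one_div_nat_cpow.2 hs)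
  have hzeta : (s - 1) * ∑' n : ℕ, ((n : ℂ) + 1) ^ (-s) = riemannZeta₁ s := by
    rw [← mul_inv_cancel_left₀ (sub_ne_zero.2 hs₁) (riemannZeta₁ s),
      ← riemannZeta_eq_inv_sub_mul hs₁, zeta_eq_tsum_one_div_nat_add_one_cpow hs]
    simp [cpow_neg]
  simpa [zetaPartial, hzeta] using (hsum.hasSum.tendsto_sum_nat.const_mul (s - 1)).add
    (tendsto_zetaTail hs)

lemma summable_nat_add_one_rpow {p : ℝ} (hp : p < -1) :
    Summable fun n : ℕ ↦ ((n : ℝ) + 1) ^ p := by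
  simpa using (summable_nat_add_iff 1).2 (Real.summable_nat_rpow.2 hp)

lemma isOpen_re_gt_neg_two : IsOpen {s : ℂ | -2 < s.re} := isOpen_lt continuous_const continuous_re

lemma exists_tendstoLocallyUniformlyOn_zetaPartial :
    ∃ G : ℂ → ℂ, TendstoLocallyUniformlyOn zetaPartial G atTop {s | -2 < s.re} := by
  refine ⟨fun s ↦ zetaPartial 0 s + ∑' n, (zetaPartial (n + 1) s - zetaPartial n s),
    (tendstoLocallyUniformlyOn_iff_forall_isCompact isOpen_re_gt_neg_two).2 fun K hK hKc ↦ ?_⟩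
  obtain ⟨C, hC⟩ := hKc.exists_bound_of_continuousOn
    (f := fun s : ℂ ↦ (s - 1) * s * (s + 1) * (s + 2)) (by fun_prop)
  obtain ⟨a, ha, haK⟩ : ∃ a : ℝ, -2 < a ∧ ∀ s ∈ K, a ≤ s.re := by
    obtain rfl | hne := K.eq_empty_or_nonempty
    · exact ⟨0, by norm_num, by simp⟩
    · obtain ⟨s₀, hs₀, hmin⟩ := hKc.exists_isMinOn hne continuous_re.continuousOn
      exact ⟨s₀.re, hK hs₀, fun s hs ↦ hmin hs⟩
  have hbound (n : ℕ) (s : ℂ) (hs : s ∈ K) :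
      ‖zetaPartial (n + 1) s - zetaPartial n s‖ ≤ C * ((n : ℝ) + 1) ^ (-a - 3) := by
    refine (norm_zetaPartial_succ_sub_le n (by linarith [haK s hs])).trans ?_
    have hC₀ : 0 ≤ C := (norm_nonneg _).trans (hC s hs)
    gcongr
    · exact hC s hs
    · linarith [n.cast_nonneg (α := ℝ)]
    · exact haK s hs
  have hunif := tendstoUniformlyOn_tsum_nat
    ((summable_nat_add_one_rpow (by linarith : -a - 3 < -1)).mul_left C) hbound
  rw [Metric.tendstoUniformlyOn_iff] at hunif ⊢
  intro ε hε
  filter_upwards [hunif ε hε] with N hN s hs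
  have htel : zetaPartial N s =
      zetaPartial 0 s + ∑ n ∈ Finset.range N, (zetaPartial (n + 1) s - zetaPartial n s) := by
    rw [Finset.sum_range_sub (fun n ↦ zetaPartial n s)]
    ring
  rw [htel, dist_add_left]
  exact hN s hs

lemma tendstoLocallyUniformlyOn_zetaPartial :
    TendstoLocallyUniformlyOn zetaPartial riemannZeta₁ atTop {s | -2 < s.re} := by
  obtain ⟨G, hG⟩ := exists_tendstoLocallyUniformlyOn_zetaPartial
  have hG_diff : DifferentiableOn ℂ G {s | -2 < s.re} :=
    hG.differentiableOn (.of_forall fun N ↦ (differentiable_zetaPartial N).differentiableOn)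
      isOpen_re_gt_neg_two
  have hG_an := hG_diff.analyticOnNhd isOpen_re_gt_neg_two
  refine hG.congr_right <| hG_an.eqOn_of_preconnected_of_eventuallyEq
    (differentiable_riemannZeta₁.differentiableOn.analyticOnNhd isOpen_re_gt_neg_two)
    (convex_halfSpace_re_gt _).isPreconnected (z₀ := 2) (by simp) ?_
  filter_upwards [(isOpen_lt continuous_const continuous_re).mem_nhds
    (by simp : (1 : ℝ) < (2 : ℂ).re)] with s hs
  exact tendsto_nhds_unique (hG.tendsto_at (by linarith [hs] : -2 < s.re))
    (tendsto_zetaPartial_of_one_lt_re hs)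

lemma sum_range_natCast_add_one (N : ℕ) :
    ∑ n ∈ Finset.range N, ((n : ℂ) + 1) = N * (N + 1) / 2 := by
  induction N with
  | zero => simp
  | succ N ih => rw [Finset.sum_range_succ, ih]; push_cast; ring

lemma zetaPartial_neg_one (N : ℕ) : zetaPartial N (-1) = 1 / 6 := by
  have hsq : ((N : ℂ) + 1) ^ (1 - -1 : ℂ) = ((N : ℂ) + 1) ^ 2 := by
    rw [← cpow_ofNat]; norm_num
  simp only [zetaPartial, zetaTail, ofReal_add, ofReal_natCast, ofReal_one, neg_neg, cpow_one,
    sum_range_natCast_add_one, hsq, sub_self, cpow_zero]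
  ring

lemma hasDerivAt_zetaPartial_neg_one (N : ℕ) :
    HasDerivAt (zetaPartial N)
      ((2 * (∑ n ∈ Finset.range N, ((n : ℝ) + 1) * Real.log (n + 1)
        - (((N : ℝ) + 1) ^ 2 / 2 - (N + 1) / 2 + 1 / 12) * Real.log (N + 1)
        + ((N : ℝ) + 1) ^ 2 / 4) - 1 / 4 : ℝ) : ℂ) (-1) := by
  have hcpow (n : ℕ) {c : ℂ → ℂ} {c' : ℂ} (hc : HasDerivAt c c' (-1)) :
      HasDerivAt (fun s ↦ ((n : ℂ) + 1) ^ c s)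
        (((n : ℂ) + 1) ^ c (-1) * (Real.log (n + 1) : ℂ) * c') (-1) := by
    rw [ofReal_log (by positivity)]
    push_cast
    exact hc.const_cpow (Or.inl n.cast_add_one_ne_zero)
  have hid := hasDerivAt_id' (-1 : ℂ)
  have hneg : HasDerivAt (fun s : ℂ ↦ -s) (-1) (-1) := hasDerivAt_neg' _
  have hsum := HasDerivAt.fun_sum (u := Finset.range N) fun n _ ↦ hcpow n hneg
  have htail := ((hcpow N (hid.const_sub 1)).fun_add
    (((hid.sub_const 1).fun_mul (hcpow N hneg)).div_const 2)).fun_add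
    ((((hid.sub_const 1).fun_mul hid).fun_mul (hcpow N (hneg.sub_const 1))).div_const 12)
  have h := ((hid.sub_const 1).fun_mul hsum).fun_add htail
  have hsq : ((N : ℂ) + 1) ^ (1 - -1 : ℂ) = ((N : ℂ) + 1) ^ 2 := by
    rw [← cpow_ofNat]; norm_num
  refine (h.congr_of_eventuallyEq (.of_forall fun s ↦ ?_)).congr_deriv ?_
  · simp [zetaPartial, zetaTail]
  simp only [neg_neg, cpow_one, sum_range_natCast_add_one, hsq, sub_self, cpow_zero, mul_neg_one,
    Finset.sum_neg_distrib]
  push_cast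
  ring

lemma tendsto_sum_mul_log_sub :
    Tendsto (fun N : ℕ ↦ ((∑ n ∈ Finset.range N, ((n : ℝ) + 1) * Real.log (n + 1)
      - (((N : ℝ) + 1) ^ 2 / 2 - (N + 1) / 2 + 1 / 12) * Real.log (N + 1)
      + ((N : ℝ) + 1) ^ 2 / 4 : ℝ) : ℂ)) atTop (𝓝 (1 / 12 - deriv riemannZeta (-1))) := by
  have hmem : (-1 : ℂ) ∈ {s : ℂ | -2 < s.re} := by norm_num
  have hlim := tendstoLocallyUniformlyOn_zetaPartial
  have hval : riemannZeta₁ (-1) = 1 / 6 :=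
    tendsto_nhds_unique (hlim.tendsto_at hmem) (by simp [zetaPartial_neg_one])
  have hderiv := (hlim.deriv (Eventually.of_forall fun N ↦
    (differentiable_zetaPartial N).differentiableOn) isOpen_re_gt_neg_two).tendsto_at hmem
  have hzeta : deriv riemannZeta (-1) = -(1 / 24) - deriv riemannZeta₁ (-1) / 2 := by
    rw [deriv_riemannZeta_eq_neg_inv_sub_sq_mul_add (by norm_num), hval]
    ring
  rw [hzeta, show (1 / 12 - (-(1 / 24) - deriv riemannZeta₁ (-1) / 2) : ℂ)
    = deriv riemannZeta₁ (-1) / 2 + 1 / 8 by ring]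
  refine ((hderiv.div_const 2).add_const (1 / 8)).congr fun N ↦ ?_
  simp only [Function.comp_apply, (hasDerivAt_zetaPartial_neg_one N).deriv]
  push_cast
  ring

/-! ### An antiderivative of log-Gamma -/

lemma summable_inv_natCast_add_one_sq : Summable fun k : ℕ ↦ (((k : ℝ) + 1) ^ 2)⁻¹ := by
  simpa using (summable_nat_add_iff 1).mpr (Real.summable_nat_pow_inv.mpr one_lt_two)

lemma norm_natCast_add_one (k : ℕ) : ‖(k : ℂ) + 1‖ = k + 1 := by
  exact_mod_cast Complex.norm_natCast (k + 1)

lemma neg_half_le_re_div_natCast_add_one {z : ℂ} (hz : 0 ≤ z.re) (k : ℕ) :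
    -1 / 2 ≤ (z / ((k : ℂ) + 1)).re := by
  have h : (z / ((k : ℂ) + 1)).re = z.re / (k + 1) := by
    exact_mod_cast div_natCast_re z (k + 1)
  rw [h]
  have : 0 ≤ z.re / (k + 1) := by positivity
  linarith

/-- The `k`-th term of the series for an antiderivative of `logGammaP`, obtained by integrating
`z / (k + 1) - log (1 + z / (k + 1))` from `0`. -/
def logGammaPrimitiveTerm (k : ℕ) (z : ℂ) : ℂ :=
  z ^ 2 / (2 * ((k : ℂ) + 1)) - ((z + ((k : ℂ) + 1)) * log (1 + z / ((k : ℂ) + 1)) - z)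

/-- The antiderivative of `logGammaP` on the right half-plane that vanishes at `0`. -/
def logGammaPrimitive (z : ℂ) : ℂ :=
  -(Real.eulerMascheroniConstant : ℂ) * z ^ 2 / 2 - (z * log z - z)
    + ∑' k, logGammaPrimitiveTerm k z

lemma norm_logGammaPrimitiveTerm_le {z : ℂ} (hz : 0 ≤ z.re) (k : ℕ) :
    ‖logGammaPrimitiveTerm k z‖ ≤ 4 * ‖z‖ ^ 3 * (((k : ℝ) + 1) ^ 2)⁻¹ := by
  have hn := k.cast_add_one_ne_zero (R := ℂ)
  have hx := neg_half_le_re_div_natCast_add_one hz k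
  have hnorm : ‖z / ((k : ℂ) + 1)‖ = ‖z‖ / (k + 1) := by rw [norm_div, norm_natCast_add_one]
  have hsplit : logGammaPrimitiveTerm k z
      = -(((k : ℂ) + 1) * (log (1 + z / (k + 1)) - z / (k + 1) + (z / (k + 1)) ^ 2 / 2))
        - z * (log (1 + z / (k + 1)) - z / (k + 1)) := by
    rw [logGammaPrimitiveTerm]
    field_simp
    ring
  calc ‖logGammaPrimitiveTerm k z‖
      ≤ (k + 1) * (2 * (‖z‖ / (k + 1)) ^ 3) + ‖z‖ * (2 * (‖z‖ / (k + 1)) ^ 2) := by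
        rw [hsplit]
        refine (norm_sub_le _ _).trans ?_
        rw [norm_neg, norm_mul, norm_mul, norm_natCast_add_one, ← hnorm]
        gcongr
        · exact norm_log_one_add_sub_self_add_sq_le hx
        · exact norm_log_one_add_sub_self_le_two_mul hx
    _ = 4 * ‖z‖ ^ 3 * (((k : ℝ) + 1) ^ 2)⁻¹ := by field_simp; ring

lemma summable_logGammaPrimitiveTerm {z : ℂ} (hz : 0 ≤ z.re) :
    Summable fun k ↦ logGammaPrimitiveTerm k z :=
  .of_norm_bounded (summable_inv_natCast_add_one_sq.mul_left _) (norm_logGammaPrimitiveTerm_le hz)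

lemma norm_div_sub_log_one_add_div_le {z : ℂ} (hz : 0 ≤ z.re) (k : ℕ) :
    ‖z / ((k : ℂ) + 1) - log (1 + z / (k + 1))‖ ≤ 2 * ‖z‖ ^ 2 * (((k : ℝ) + 1) ^ 2)⁻¹ := by
  have h := norm_log_one_add_sub_self_le_two_mul (neg_half_le_re_div_natCast_add_one hz k)
  rw [norm_sub_rev, norm_div, norm_natCast_add_one] at h
  exact h.trans_eq (by rw [div_pow, div_eq_mul_inv, mul_assoc])

lemma summable_div_sub_log_one_add_div {z : ℂ} (hz : 0 ≤ z.re) :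
    Summable fun k : ℕ ↦ z / ((k : ℂ) + 1) - log (1 + z / (k + 1)) :=
  .of_norm_bounded (summable_inv_natCast_add_one_sq.mul_left _)
    (norm_div_sub_log_one_add_div_le hz)

lemma hasDerivAt_logGammaPrimitiveTerm {z : ℂ} (hz : 0 ≤ z.re) (k : ℕ) :
    HasDerivAt (logGammaPrimitiveTerm k) (z / ((k : ℂ) + 1) - log (1 + z / (k + 1))) z := by
  have hn := k.cast_add_one_ne_zero (R := ℂ)
  have hslit : 1 + z / ((k : ℂ) + 1) ∈ slitPlane :=
    mem_slitPlane_one_add (by linarith [neg_half_le_re_div_natCast_add_one hz k])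
  have hid := hasDerivAt_id' z
  have hlog := ((hid.div_const ((k : ℂ) + 1)).const_add 1).clog hslit
  refine (((hid.fun_pow 2).div_const (2 * ((k : ℂ) + 1))).fun_sub
    (((hid.add_const ((k : ℂ) + 1)).fun_mul hlog).fun_sub hid)).congr_deriv ?_
  have hne := slitPlane_ne_zero hslit
  have hne' : (k : ℂ) + 1 + z ≠ 0 := by
    rwa [show 1 + z / ((k : ℂ) + 1) = (k + 1 + z) / (k + 1) by field_simp, div_ne_zero_iff,
      and_iff_left hn] at hne
  field_simp
  ring

lemma hasDerivAt_logGammaPrimitive {z : ℂ} (hz : 0 < z.re) :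
    HasDerivAt logGammaPrimitive (logGammaP z) z := by
  have hseries : HasDerivAt (fun z ↦ ∑' k, logGammaPrimitiveTerm k z)
      (∑' k : ℕ, (z / ((k : ℂ) + 1) - log (1 + z / (k + 1)))) z := by
    let U : Set ℂ := {w | 0 < w.re} ∩ Metric.ball 0 (‖z‖ + 1)
    have hzU : z ∈ U := ⟨hz, by simp⟩
    have hU : IsOpen U := (isOpen_lt continuous_const continuous_re).inter Metric.isOpen_ball
    refine hasDerivAt_tsum_of_isPreconnected
      (summable_inv_natCast_add_one_sq.mul_left (2 * (‖z‖ + 1) ^ 2)) hU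
      ((convex_halfSpace_re_gt 0).inter (convex_ball 0 _)).isPreconnected
      (fun k w hw ↦ hasDerivAt_logGammaPrimitiveTerm (le_of_lt hw.1) k) (fun k w hw ↦ ?_) hzU
      (summable_logGammaPrimitiveTerm hz.le) hzU
    have hwz : ‖w‖ ≤ ‖z‖ + 1 := (mem_ball_zero_iff.mp hw.2).le
    exact (norm_div_sub_log_one_add_div_le (le_of_lt hw.1) k).trans (by gcongr)
  have hid := hasDerivAt_id' z
  have hlog := hid.fun_mul (hid.clog (Or.inl hz))
  refine (((((hid.fun_pow 2).const_mul _).div_const 2).fun_sub (hlog.fun_sub hid)).fun_add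
    hseries).congr_deriv ?_
  have hne : z ≠ 0 := slitPlane_ne_zero (Or.inl hz)
  rw [logGammaP]
  field_simp
  ring

lemma differentiableOn_logGammaP : DifferentiableOn ℂ logGammaP {z | 0 < z.re} := by
  have hopen : IsOpen {z : ℂ | 0 < z.re} := isOpen_lt continuous_const continuous_re
  have hP : DifferentiableOn ℂ logGammaPrimitive {z | 0 < z.re} := fun z hz ↦
    (hasDerivAt_logGammaPrimitive hz).differentiableAt.differentiableWithinAt
  exact (hP.deriv hopen).congr fun z hz ↦ (hasDerivAt_logGammaPrimitive hz).deriv.symm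

lemma mul_integral_logGammaP_segment {a w : ℂ} (ha : 0 < a.re) (hw : 0 ≤ w.re) :
    w * ∫ t in (0 : ℝ)..1, logGammaP (a + t * w)
      = logGammaPrimitive (a + w) - logGammaPrimitive a := by
  have hpos (t : ℝ) (ht : t ∈ Set.Icc (0 : ℝ) 1) : 0 < (a + t • w).re := by
    rw [add_re, real_smul, re_ofReal_mul]
    exact add_pos_of_pos_of_nonneg ha (mul_nonneg ht.1 hw)
  have h := intervalIntegral.integral_unitInterval_deriv_eq_sub (𝕜 := ℂ) (z₀ := a) (z₁ := w)
    (differentiableOn_logGammaP.continuousOn.comp (by fun_prop) hpos)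
    fun t ht ↦ hasDerivAt_logGammaPrimitive (hpos t ht)
  simpa only [smul_eq_mul, real_smul] using h

lemma tendsto_log_factorial_sub :
    Tendsto (fun n : ℕ ↦ Real.log n.factorial - (n * Real.log n - n + Real.log n / 2)) atTop
      (𝓝 (Real.log (2 * Real.pi) / 2)) := by
  have hπ : √Real.pi ≠ 0 := (Real.sqrt_pos.mpr Real.pi_pos).ne'
  have hval : Real.log (2 * Real.pi) / 2 = Real.log √Real.pi + Real.log 2 / 2 := by
    rw [Real.log_mul two_ne_zero Real.pi_ne_zero, Real.log_sqrt Real.pi_pos.le]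
    ring
  rw [hval]
  refine ((Stirling.tendsto_stirlingSeq_sqrt_pi.log hπ).add_const _).congr' ?_
  filter_upwards [eventually_ne_atTop 0] with n hn
  have hn' : (n : ℝ) ≠ 0 := Nat.cast_ne_zero.mpr hn
  rw [Stirling.log_stirlingSeq_formula, Real.log_mul two_ne_zero hn',
    Real.log_div hn' (Real.exp_ne_zero 1), Real.log_exp]
  ring

lemma log_one_add_div_natCast_add_one {a : ℝ} (ha : -1 < a) (k : ℕ) :
    Real.log (1 + a / (k + 1)) = Real.log (a + (k + 1)) - Real.log (k + 1) := by
  have hk : (0 : ℝ) < k + 1 := by positivity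
  have hak : 0 < a + (k + 1) := by linarith [(Nat.cast_nonneg k : (0 : ℝ) ≤ k)]
  rw [← Real.log_div hak.ne' hk.ne']
  congr 1
  field_simp
  ring

lemma sum_range_div_sub_log_one_add_div {a : ℝ} (ha : 0 < a) (N : ℕ) :
    ∑ k ∈ Finset.range N, (a / (k + 1) - Real.log (1 + a / (k + 1)))
      = Real.BohrMollerup.logGammaSeq a N + Real.log a
        + a * ((harmonic N : ℝ) - Real.log N) := by
  suffices ∑ k ∈ Finset.range N, (a / (k + 1) - Real.log (1 + a / (k + 1)))
      = Real.log N.factorial - ∑ m ∈ Finset.range (N + 1), Real.log (a + m) + Real.log a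
        + a * harmonic N by
    rw [this, Real.BohrMollerup.logGammaSeq]
    ring
  induction N with
  | zero => simp
  | succ N ih =>
    rw [Finset.sum_range_succ, ih, Finset.sum_range_succ _ (N + 1), harmonic_succ,
      Nat.factorial_succ, Nat.cast_mul, Real.log_mul (by positivity) (by positivity),
      log_one_add_div_natCast_add_one (by linarith)]
    push_cast
    ring

lemma logGammaP_ofReal {a : ℝ} (ha : 0 < a) : logGammaP a = Real.log (Real.Gamma a) := by
  have hsum := (summable_div_sub_log_one_add_div (z := a) ha.le).hasSum.tendsto_sum_nat
  have hlim := ((Real.BohrMollerup.tendsto_log_gamma ha).add_const (Real.log a)).add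
    (Real.tendsto_harmonic_sub_log.const_mul a)
  have hterm (k : ℕ) : (a : ℂ) / (k + 1) - log (1 + a / (k + 1))
      = ((a / (k + 1) - Real.log (1 + a / (k + 1)) : ℝ) : ℂ) := by
    push_cast [ofReal_log (by positivity : (0 : ℝ) ≤ 1 + a / (k + 1))]
    rfl
  rw [logGammaP, tendsto_nhds_unique hsum ((continuous_ofReal.tendsto _).comp hlim |>.congr
    fun N ↦ by simp_rw [Function.comp_apply, ← sum_range_div_sub_log_one_add_div ha, hterm,
      ofReal_sum]), ← ofReal_log ha.le]
  push_cast
  ring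

/-! ### Barnes `G`-function -/

/-- The `k`-th term of the series defining `logBarnesG1p`. -/
def logBarnesTerm (k : ℕ) (x : ℝ) : ℝ :=
  ((k : ℝ) + 1) * Real.log (1 + x / (k + 1)) - x + x ^ 2 / (2 * (k + 1))

lemma logBarnesG1p_eq (x : ℝ) :
    logBarnesG1p x = x / 2 * Real.log (2 * Real.pi)
      - (x + x ^ 2 * (1 + Real.eulerMascheroniConstant)) / 2 + ∑' k, logBarnesTerm k x :=
  rfl

lemma logGammaPrimitiveTerm_add_logBarnesTerm {a : ℝ} (ha : 0 < a) (k : ℕ) :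
    logGammaPrimitiveTerm k a + logBarnesTerm k a
      = a * ((a : ℂ) / (k + 1) - log (1 + a / (k + 1))) := by
  have hk := k.cast_add_one_ne_zero (R := ℂ)
  rw [logGammaPrimitiveTerm, logBarnesTerm]
  push_cast [ofReal_log (by positivity : (0 : ℝ) ≤ 1 + a / (k + 1))]
  field_simp
  ring

lemma abs_logBarnesTerm_le {x : ℝ} {k : ℕ} (hx : -1 / 2 ≤ x / (k + 1)) :
    |logBarnesTerm k x| ≤ 2 * |x| ^ 3 * (((k : ℝ) + 1) ^ 2)⁻¹ := by
  have hk : (0 : ℝ) < k + 1 := by positivity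
  have hlog : ((Real.log (1 + x / (k + 1)) : ℝ) : ℂ) = log (1 + ((x / (k + 1) : ℝ) : ℂ)) := by
    rw [ofReal_log (by linarith), ofReal_add, ofReal_one]
  have hbound := norm_log_one_add_sub_self_add_sq_le (x := ((x / (k + 1) : ℝ) : ℂ))
    (by rwa [ofReal_re])
  rw [← hlog] at hbound
  norm_cast at hbound
  rw [Real.norm_eq_abs, Real.norm_eq_abs, Nat.cast_add_one, abs_div, abs_of_pos hk] at hbound
  calc |logBarnesTerm k x|
      = (k + 1) * |Real.log (1 + x / (k + 1)) - x / (k + 1) + (x / (k + 1)) ^ 2 / 2| := by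
        rw [← abs_of_pos hk, ← abs_mul, abs_of_pos hk, logBarnesTerm]
        congr 1
        field_simp
    _ ≤ (k + 1) * (2 * (|x| / (k + 1)) ^ 3) := by gcongr
    _ = 2 * |x| ^ 3 * (((k : ℝ) + 1) ^ 2)⁻¹ := by field_simp

lemma summable_logBarnesTerm {x : ℝ} (hx : -1 < x) : Summable fun k ↦ logBarnesTerm k x := by
  refine .of_norm_bounded_eventually_nat (summable_inv_natCast_add_one_sq.mul_left (2 * |x| ^ 3)) ?_
  filter_upwards [eventually_ge_atTop 1] with k hk
  have hk : (1 : ℝ) ≤ k := by exact_mod_cast hk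
  refine abs_logBarnesTerm_le ?_
  rw [div_le_div_iff₀ two_pos (by positivity)]
  linarith

lemma sum_range_logBarnesTerm_sub {a : ℝ} (ha : 0 < a) (N : ℕ) :
    ∑ k ∈ Finset.range N, (logBarnesTerm k a - logBarnesTerm k (a - 1))
      = N * Real.log (a + N) - ∑ m ∈ Finset.range N, Real.log (a + m) - N
        + (a - 1 / 2) * harmonic N := by
  induction N with
  | zero => simp
  | succ N ih =>
    rw [Finset.sum_range_succ, ih, Finset.sum_range_succ, harmonic_succ, logBarnesTerm,
      logBarnesTerm, log_one_add_div_natCast_add_one (by linarith),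
      log_one_add_div_natCast_add_one (by linarith)]
    push_cast
    rw [show a - 1 + ((N : ℝ) + 1) = a + N by ring]
    field_simp
    ring

lemma tendsto_sum_range_logBarnesTerm_sub {a : ℝ} (ha : 0 < a) :
    Tendsto (fun N : ℕ ↦ ∑ k ∈ Finset.range N, (logBarnesTerm k a - logBarnesTerm k (a - 1)))
      atTop (𝓝 (Real.log (Real.Gamma a) + (a - 1 / 2) * Real.eulerMascheroniConstant + a
        - Real.log (2 * Real.pi) / 2)) := by
  have hmul := (Real.tendsto_mul_log_one_add_div_atTop a).comp tendsto_natCast_atTop_atTop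
  have hlog : Tendsto (fun N : ℕ ↦ Real.log (1 + a / N)) atTop (𝓝 0) := by
    have h := (tendsto_const_div_atTop_nhds_zero_nat a).const_add 1
    simpa using h.log (by norm_num)
  have hlim := (((((Real.BohrMollerup.tendsto_log_gamma ha).add
    (Real.tendsto_harmonic_sub_log.const_mul (a - 1 / 2))).add hmul).add hlog).sub
      tendsto_log_factorial_sub)
  rw [add_zero] at hlim
  refine hlim.congr' ?_
  filter_upwards [eventually_ne_atTop 0] with N hN
  have hN : (0 : ℝ) < N := Nat.cast_pos.mpr (Nat.pos_of_ne_zero hN)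
  have hquot : Real.log (1 + a / N) = Real.log (a + N) - Real.log N := by
    rw [← Real.log_div (by positivity) hN.ne']
    congr 1
    field_simp
    ring
  rw [sum_range_logBarnesTerm_sub ha, Real.BohrMollerup.logGammaSeq, Finset.sum_range_succ,
    Function.comp_apply, hquot]
  ring

lemma logBarnesG1p_sub_one {a : ℝ} (ha : 0 < a) :
    logBarnesG1p (a - 1) = logBarnesG1p a - Real.log (Real.Gamma a) := by
  have hs := summable_logBarnesTerm (x := a) (by linarith)
  have hs' := summable_logBarnesTerm (x := a - 1) (by linarith)
  have h := tendsto_nhds_unique (hs.sub hs').hasSum.tendsto_sum_nat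
    (tendsto_sum_range_logBarnesTerm_sub ha)
  rw [hs.tsum_sub hs'] at h
  rw [logBarnesG1p_eq, logBarnesG1p_eq]
  linear_combination -h

lemma logGammaPrimitive_ofReal {a : ℝ} (ha : 0 < a) :
    logGammaPrimitive a = ((a / 2 * Real.log (2 * Real.pi) - a * (a - 1) / 2
      - logBarnesG1p (a - 1) + (a - 1) * Real.log (Real.Gamma a) : ℝ) : ℂ) := by
  have hterms : ∑' k, logGammaPrimitiveTerm k a + (∑' k, logBarnesTerm k a : ℝ)
      = a * ∑' k : ℕ, ((a : ℂ) / (k + 1) - log (1 + a / (k + 1))) := by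
    rw [ofReal_tsum, ← (summable_logGammaPrimitiveTerm (z := a) ha.le).tsum_add
      (summable_ofReal.mpr (summable_logBarnesTerm (by linarith))), ← tsum_mul_left]
    exact tsum_congr (logGammaPrimitiveTerm_add_logBarnesTerm ha)
  have hGamma := logGammaP_ofReal ha
  rw [logBarnesG1p_sub_one ha, logBarnesG1p_eq, logGammaPrimitive]
  rw [logGammaP] at hGamma
  push_cast at hterms ⊢
  linear_combination hterms + (a : ℂ) * hGamma

/-! ### Stirling expansion of the antiderivative -/

/-- The Stirling approximation of `logGammaPrimitive`, up to affine terms: the Euler–Maclaurin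
formula, truncated after its third term, for the summation of `-(z * log z - z)`. -/
def stirlingPrimitive (z : ℂ) : ℂ :=
  (z ^ 2 / 2 - z / 2 + 1 / 12) * log z - 3 * z ^ 2 / 4 + z / 2

/-- The shape of the Stirling approximation of `w ↦ logGammaPrimitive (a + w)` in powers of `w`; the
shift `a` enters only through the coefficients. -/
def stirlingForm (β δ B K w : ℂ) : ℂ :=
  (w ^ 2 / 2 + β * w + δ) * log w - 3 / 4 * w ^ 2 + B * w + K

/-- The amount by which `stirlingPrimitive` fails to satisfy the difference equation of the
function it approximates. -/
def stirlingDefect (z : ℂ) : ℂ :=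
  stirlingPrimitive (z + 1) - stirlingPrimitive z - (z * log z - z)

lemma norm_sq_add_sq_le_norm_add_ofReal_sq {z : ℂ} (hz : 0 ≤ z.re) {x : ℝ} (hx : 0 ≤ x) :
    ‖z‖ ^ 2 + x ^ 2 ≤ ‖z + x‖ ^ 2 := by
  rw [← normSq_eq_norm_sq, ← normSq_eq_norm_sq, normSq_apply, normSq_apply, add_re, add_im,
    ofReal_re, ofReal_im]
  nlinarith [mul_nonneg hz hx]

lemma mem_slitPlane_of_re_nonneg {z : ℂ} (hz : 0 ≤ z.re) (hz₀ : z ≠ 0) : z ∈ slitPlane :=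
  hz.lt_or_eq.imp id fun h him ↦ hz₀ (Complex.ext h.symm him)

lemma add_ofReal_mem_slitPlane {z : ℂ} (hz : 0 ≤ z.re) (hz₀ : z ≠ 0) {x : ℝ} (hx : 0 ≤ x) :
    z + x ∈ slitPlane := by
  refine mem_slitPlane_of_re_nonneg (by rw [add_re, ofReal_re]; positivity) fun h ↦ ?_
  have hle := norm_sq_add_sq_le_norm_add_ofReal_sq hz hx
  rw [h, norm_zero] at hle
  nlinarith [norm_pos_iff.mpr hz₀, sq_nonneg x]

lemma norm_stirlingDefect_le {z : ℂ} (hz : 0 ≤ z.re) (hz₀ : z ≠ 0) :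
    ‖stirlingDefect z‖ ≤ (‖z‖ ^ 2)⁻¹ := by
  have hslit {x : ℝ} (hx : x ∈ Set.Icc (0 : ℝ) 1) : z + x ∈ slitPlane :=
    add_ofReal_mem_slitPlane hz hz₀ hx.1
  have hne {x : ℝ} (hx : x ∈ Set.Icc (0 : ℝ) 1) : z + x ≠ 0 := slitPlane_ne_zero (hslit hx)
  have hid (x : ℝ) : HasDerivAt (fun x : ℝ ↦ z + x) 1 x := (hasDerivAt_id x).ofReal_comp.const_add z
  have hlog {x : ℝ} (hx : x ∈ Set.Icc (0 : ℝ) 1) :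
      HasDerivAt (fun x : ℝ ↦ log (z + x)) ((z + x)⁻¹) x := by
    simpa using (hid x).clog_real (hslit hx)
  have h := norm_eulerMaclaurin_remainder_le
    (F := fun x : ℝ ↦ (z + x) ^ 2 / 2 * log (z + x) - 3 * (z + x) ^ 2 / 4)
    (f := fun x : ℝ ↦ (z + x) * log (z + x) - (z + x)) (f₁ := fun x : ℝ ↦ log (z + x))
    (f₂ := fun x : ℝ ↦ (z + x)⁻¹) (f₃ := fun x : ℝ ↦ -1 / (z + x) ^ 2) (K := (‖z‖ ^ 2)⁻¹)
    (fun x hx ↦ ?_) (fun x hx ↦ ?_) (fun x hx ↦ hlog hx) (fun x hx ↦ (hid x).fun_inv (hne hx))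
    (fun x hx ↦ ?_)
  · rw [← norm_neg] at h
    refine (congrArg norm ?_).trans_le h
    simp only [stirlingDefect, stirlingPrimitive, ofReal_zero, add_zero, ofReal_one, real_smul]
    push_cast
    ring
  · refine ((((hid x).fun_pow 2).div_const 2).fun_mul (hlog hx) |>.fun_sub
      ((((hid x).fun_pow 2).const_mul 3).div_const 4)).congr_deriv ?_
    field_simp [hne hx]
    ring
  · refine (((hid x).fun_mul (hlog hx)).fun_sub (hid x)).congr_deriv ?_
    rw [mul_inv_cancel₀ (hne hx)]
    ring
  · rw [norm_div, norm_neg, norm_one, norm_pow, one_div]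
    gcongr ?_⁻¹
    linarith [norm_sq_add_sq_le_norm_add_ofReal_sq hz hx.1, sq_nonneg x]

lemma norm_sum_range_stirlingDefect_le {z : ℂ} (hz : 0 ≤ z.re) (hz₁ : 1 < ‖z‖) (N : ℕ) :
    ‖∑ k ∈ Finset.range N, stirlingDefect (z + k)‖ ≤ 2 / (‖z‖ - 1) := by
  have hz₀ : 0 < ‖z‖ - 1 := by linarith
  suffices ‖∑ k ∈ Finset.range N, stirlingDefect (z + k)‖ ≤ 2 / (‖z‖ - 1) - 2 / (‖z‖ - 1 + N) from
    this.trans (sub_le_self _ (by positivity))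
  induction N with
  | zero => simp
  | succ N ih =>
    have hsq : (‖z‖ + N) ^ 2 ≤ 2 * ‖z + N‖ ^ 2 := by
      have h := norm_sq_add_sq_le_norm_add_ofReal_sq hz N.cast_nonneg
      rw [ofReal_natCast] at h
      linarith [sq_nonneg (‖z‖ - N)]
    have hpos : 0 < ‖z + N‖ ^ 2 := by
      have : 0 < (‖z‖ + N) ^ 2 := by positivity
      linarith
    have hdefect : ‖stirlingDefect (z + N)‖ ≤ 2 / (‖z‖ - 1 + N) - 2 / (‖z‖ + N) :=
      calc ‖stirlingDefect (z + N)‖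
          ≤ (‖z + N‖ ^ 2)⁻¹ := norm_stirlingDefect_le
            (by rw [add_re, natCast_re]; positivity) (by rintro h; simp [h] at hpos)
        _ ≤ 2 / ((‖z‖ - 1 + N) * (‖z‖ + N)) := by
            rw [inv_eq_one_div, div_le_div_iff₀ hpos (by positivity)]
            nlinarith
        _ = 2 / (‖z‖ - 1 + N) - 2 / (‖z‖ + N) := by field_simp; ring
    rw [Finset.sum_range_succ, Nat.cast_succ, show ‖z‖ - 1 + ((N : ℝ) + 1) = ‖z‖ + N by ring]
    linarith [norm_add_le (∑ k ∈ Finset.range N, stirlingDefect (z + k)) (stirlingDefect (z + N))]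

lemma log_add_natCast_add_one {z : ℂ} (hz : 0 ≤ z.re) (k : ℕ) :
    log (z + (k + 1)) = Real.log (k + 1) + log (1 + z / (k + 1)) := by
  have hk := k.cast_add_one_ne_zero (R := ℂ)
  have hne : 1 + z / ((k : ℂ) + 1) ≠ 0 := slitPlane_ne_zero
    (mem_slitPlane_one_add (by linarith [neg_half_le_re_div_natCast_add_one hz k]))
  rw [← log_ofReal_mul (by positivity) hne]
  push_cast
  congr 1
  field_simp
  ring

lemma sum_range_logGammaPrimitiveTerm {z : ℂ} (hz : 0 ≤ z.re) (N : ℕ) :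
    -(z * log z - z) + ∑ k ∈ Finset.range N, logGammaPrimitiveTerm k z
      = stirlingPrimitive z - stirlingPrimitive (z + (N + 1))
        + ∑ k ∈ Finset.range (N + 1), stirlingDefect (z + k)
        + z ^ 2 / 2 * (harmonic N : ℝ) + z * Real.log N.factorial
        + (∑ k ∈ Finset.range N, ((k : ℝ) + 1) * Real.log (k + 1) : ℝ) - N * (N + 1) / 2 := by
  induction N with
  | zero =>
    simp only [Finset.sum_range_zero, Finset.sum_range_one, zero_add, add_zero, stirlingDefect,
      harmonic_zero, Nat.factorial_zero, Nat.cast_zero, Nat.cast_one, Real.log_one, Rat.cast_zero,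
      ofReal_zero]
    ring
  | succ N ih =>
    rw [Finset.sum_range_succ, ← add_assoc, ih, Finset.sum_range_succ _ (N + 1),
      Finset.sum_range_succ (fun k : ℕ ↦ ((k : ℝ) + 1) * Real.log (k + 1)), harmonic_succ,
      Nat.factorial_succ, Nat.cast_mul, Real.log_mul (by positivity) (by positivity)]
    have hlog := log_add_natCast_add_one hz N
    have hN := N.cast_add_one_ne_zero (R := ℂ)
    push_cast [stirlingDefect, logGammaPrimitiveTerm] at hlog ⊢
    rw [hlog, show z + ((N : ℂ) + 1) + 1 = z + (N + 1 + 1) by ring]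
    field_simp
    ring

lemma isBigO_one_id_cobounded : (fun _ ↦ 1 : ℂ → ℂ) =O[cobounded ℂ] fun w ↦ w :=
  .of_bound 1 <| by
    filter_upwards [tendsto_norm_cobounded_atTop.eventually_ge_atTop 1] with w hw
    simpa using hw

lemma tendsto_const_div_cobounded (z : ℂ) : Tendsto (fun w ↦ z / w) (cobounded ℂ) (𝓝 0) := by
  simpa [div_eq_mul_inv] using (tendsto_inv₀_cobounded (α := ℂ)).const_mul z

lemma isBigO_log_one_add_div (z : ℂ) :
    (fun w ↦ log (1 + z / w) - z / w + (z / w) ^ 2 / 2) =O[cobounded ℂ] fun w ↦ w⁻¹ ^ 3 := by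
  refine .of_bound (2 * ‖z‖ ^ 3) ?_
  filter_upwards [((tendsto_const_div_cobounded z).norm).eventually_le_const
    (show ‖(0 : ℂ)‖ < 1 / 2 by norm_num)] with w hw
  refine (norm_log_one_add_sub_self_add_sq_le ?_).trans_eq ?_
  · linarith [neg_le_of_abs_le ((abs_re_le_norm (z / w)).trans hw)]
  · rw [norm_div, norm_pow, norm_inv, div_pow, inv_pow, div_eq_mul_inv, mul_assoc]

lemma isBigO_stirlingCoeff_mul_log_one_add_div (z : ℂ) :
    (fun w ↦ ((z + w) ^ 2 / 2 - (z + w) / 2 + 1 / 12) * log (1 + z / w)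
      - (z * w / 2 + 3 * z ^ 2 / 4 - z / 2)) =O[cobounded ℂ] fun w ↦ w⁻¹ := by
  have hone := isBigO_one_id_cobounded
  have hid : (fun w : ℂ ↦ w) =O[cobounded ℂ] fun w ↦ w ^ 2 := by
    simpa [sq] using hone.mul (isBigO_refl (fun w : ℂ ↦ w) _)
  have hinv : (fun w : ℂ ↦ w⁻¹ ^ 2) =O[cobounded ℂ] fun w ↦ w⁻¹ := by
    have h := (isBigO_refl (fun w : ℂ ↦ w⁻¹ ^ 2) (cobounded ℂ)).mul hone
    refine (h.congr_left fun w ↦ mul_one _).congr' .rfl ?_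
    filter_upwards [eventually_ne_cobounded (0 : ℂ)] with w hw
    field_simp
  have hquad : (fun w : ℂ ↦ (z + w) ^ 2 / 2 - (z + w) / 2 + 1 / 12) =O[cobounded ℂ]
      fun w ↦ w ^ 2 := by
    refine ((((isBigO_refl (fun w : ℂ ↦ w ^ 2) _).const_mul_left (1 / 2)).add
      (hid.const_mul_left (z - 1 / 2))).add
      ((hone.trans hid).const_mul_left (z ^ 2 / 2 - z / 2 + 1 / 12))).congr_left fun w ↦ by ring
  have hrem : (fun w ↦ ((z + w) ^ 2 / 2 - (z + w) / 2 + 1 / 12)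
      * (log (1 + z / w) - z / w + (z / w) ^ 2 / 2)) =O[cobounded ℂ] fun w ↦ w⁻¹ := by
    refine (hquad.mul (isBigO_log_one_add_div z)).congr' .rfl ?_
    filter_upwards [eventually_ne_cobounded (0 : ℂ)] with w hw
    field_simp
  have hmain := ((isBigO_refl (fun w : ℂ ↦ w⁻¹) (cobounded ℂ)).const_mul_left
    ((z ^ 2 / 2 - z / 2 + 1 / 12) * z - (z - 1 / 2) * z ^ 2 / 2)).sub
    (hinv.const_mul_left ((z ^ 2 / 2 - z / 2 + 1 / 12) * z ^ 2 / 2))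
  refine (hrem.add hmain).congr' ?_ .rfl
  filter_upwards [eventually_ne_cobounded (0 : ℂ)] with w hw
  field_simp
  ring

lemma tendsto_sum_range_stirlingDefect {z : ℂ} (hz : 0 ≤ z.re) :
    Tendsto (fun N : ℕ ↦ ∑ k ∈ Finset.range (N + 1), stirlingDefect (z + k)) atTop
      (𝓝 (logGammaPrimitive z - (stirlingPrimitive z + Real.log (2 * Real.pi) / 2 * z
        + (1 / 12 - deriv riemannZeta (-1))))) := by
  have hofReal {f : ℕ → ℝ} {x : ℝ} (h : Tendsto f atTop (𝓝 x)) :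
      Tendsto (fun N ↦ (f N : ℂ)) atTop (𝓝 (x : ℂ)) := (continuous_ofReal.tendsto x).comp h
  have hsum := (summable_logGammaPrimitiveTerm hz).hasSum.tendsto_sum_nat
  have hharm := hofReal Real.tendsto_harmonic_sub_log_add_one
  have hfact := hofReal ((tendsto_add_atTop_iff_nat 1).mpr tendsto_log_factorial_sub)
  have hquad := ((isBigO_stirlingCoeff_mul_log_one_add_div z).trans_tendsto
    tendsto_inv₀_cobounded).comp
      ((tendsto_natCast_atTop_cobounded (α := ℂ)).comp (tendsto_add_atTop_nat 1))
  have hlim := ((((hsum.const_add (-(z * log z - z))).sub_const (stirlingPrimitive z)).sub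
    (hharm.const_mul (z ^ 2 / 2))).sub (hfact.const_mul z)).sub tendsto_sum_mul_log_sub |>.add hquad
  refine (hlim.congr fun N ↦ ?_).trans_eq ?_
  · have hlog := log_add_natCast_add_one hz N
    rw [sum_range_logGammaPrimitiveTerm hz, Nat.factorial_succ, Nat.cast_mul,
      Real.log_mul (by positivity) (by positivity)]
    simp only [Function.comp_apply, stirlingPrimitive]
    push_cast at hlog ⊢
    rw [hlog]
    ring
  · rw [logGammaPrimitive]
    push_cast
    congr 1
    ring

lemma norm_logGammaPrimitive_sub_le {z : ℂ} (hz : 0 ≤ z.re) (hz₁ : 1 < ‖z‖) :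
    ‖logGammaPrimitive z - (stirlingPrimitive z + Real.log (2 * Real.pi) / 2 * z
      + (1 / 12 - deriv riemannZeta (-1)))‖ ≤ 2 / (‖z‖ - 1) :=
  le_of_tendsto (tendsto_sum_range_stirlingDefect hz).norm
    (.of_forall fun N ↦ norm_sum_range_stirlingDefect_le hz hz₁ (N + 1))

lemma isBigO_stirlingPrimitive_add (a : ℂ) :
    (fun w ↦ stirlingPrimitive (a + w)
      - stirlingForm (a - 1 / 2) (a ^ 2 / 2 - a / 2 + 1 / 12) (1 / 2 - a) 0 w)
      =O[cobounded ℂ ⊓ 𝓟 {w | 0 ≤ w.re}] fun w ↦ w⁻¹ := by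
  refine ((isBigO_stirlingCoeff_mul_log_one_add_div a).mono inf_le_left).congr' ?_ .rfl
  have hre : ∀ᶠ w in cobounded ℂ, -1 / 2 < (a / w).re :=
    ((continuous_re.tendsto 0).comp (tendsto_const_div_cobounded a)).eventually_const_lt
      (by norm_num)
  filter_upwards [(hre.and (eventually_ne_cobounded 0)).filter_mono inf_le_left,
    mem_inf_of_right (mem_principal_self _)] with w ⟨haw, hw₀⟩ hw
  have hslit : 0 < (1 + a / w).re := by rw [add_re, one_re]; linarith
  have hlog : log (a + w) = log w + log (1 + a / w) := by
    have harg := abs_lt.mp (abs_arg_lt_pi_div_two_iff.mpr (Or.inl hslit))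
    have harg' := abs_le.mp (abs_arg_le_pi_div_two_iff.mpr hw)
    rw [← log_mul hw₀ (slitPlane_ne_zero (Or.inl hslit)) ⟨by linarith, by linarith⟩]
    congr 1
    field_simp
    ring
  rw [stirlingPrimitive, stirlingForm, hlog]
  ring

lemma isBigO_logGammaPrimitive_add_sub {a : ℂ} (ha : 0 ≤ a.re) :
    (fun w ↦ logGammaPrimitive (a + w) - stirlingForm (a - 1 / 2) (a ^ 2 / 2 - a / 2 + 1 / 12)
        (1 / 2 - a + Real.log (2 * Real.pi) / 2)
        (a * Real.log (2 * Real.pi) / 2 + 1 / 12 - deriv riemannZeta (-1)) w)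
      =O[cobounded ℂ ⊓ 𝓟 {w | 0 ≤ w.re}] fun w ↦ w⁻¹ := by
  have hrem : (fun w ↦ logGammaPrimitive (a + w) - (stirlingPrimitive (a + w)
      + Real.log (2 * Real.pi) / 2 * (a + w) + (1 / 12 - deriv riemannZeta (-1))))
      =O[cobounded ℂ ⊓ 𝓟 {w | 0 ≤ w.re}] fun w ↦ w⁻¹ := by
    refine .of_bound 4 ?_
    filter_upwards [(tendsto_norm_cobounded_atTop.eventually_ge_atTop (2 * ‖a‖ + 2)).filter_mono
      inf_le_left, mem_inf_of_right (mem_principal_self _)] with w hw hre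
    have hnorm : ‖w‖ / 2 ≤ ‖a + w‖ - 1 := by
      have h := norm_sub_le (a + w) a
      rw [add_sub_cancel_left] at h
      linarith
    have hpos : 0 < ‖w‖ / 2 := by linarith [norm_nonneg a]
    calc _ ≤ 2 / (‖a + w‖ - 1) :=
          norm_logGammaPrimitive_sub_le (by rw [add_re]; positivity) (by linarith)
      _ ≤ 2 / (‖w‖ / 2) := by gcongr
      _ = 4 * ‖w⁻¹‖ := by rw [norm_inv]; field_simp; norm_num
  refine (hrem.add (isBigO_stirlingPrimitive_add a)).congr_left fun w ↦ ?_
  simp only [stirlingForm]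
  ring

/-! ### Standard expansions of integrals -/

namespace HasStdExpansion

variable {ρ : ℝ} {f : ℝ → ℂ} {κ : ℂ}

lemma const_mul (h : HasStdExpansion ρ f κ) (c : ℂ) :
    HasStdExpansion ρ (fun s ↦ c * f s) (c * κ) := by
  obtain ⟨d₁, d₂, d₃, d₄, d₅, d₆, d₇, h⟩ := h
  refine ⟨c * d₁, c * d₂, c * d₃, c * d₄, c * d₅, c * d₆, c * d₇,
    (h.const_mul_left c).congr_left fun s ↦ ?_⟩
  ring

lemma congr' {g : ℝ → ℂ} (h : HasStdExpansion ρ f κ) (hfg : f =ᶠ[atTop] g) :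
    HasStdExpansion ρ g κ := by
  obtain ⟨d₁, d₂, d₃, d₄, d₅, d₆, d₇, h⟩ := h
  exact ⟨d₁, d₂, d₃, d₄, d₅, d₆, d₇, h.congr' (hfg.mono fun s hs ↦ by simp only [hs]) .rfl⟩

lemma comp_rpow (h : HasStdExpansion 1 f κ) (hρ : 0 < ρ) :
    HasStdExpansion ρ (fun s ↦ f (s ^ ρ)) κ := by
  obtain ⟨d₁, d₂, d₃, d₄, d₅, d₆, d₇, h⟩ := h
  refine ⟨d₁ * ρ, d₂, d₃ * ρ ^ 2, d₄ * ρ, d₅, d₆ * ρ ^ 2, d₇ * ρ, ?_⟩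
  refine ((h.comp_tendsto (tendsto_rpow_atTop hρ)).congr' ?_ ?_).trans
    (isBigO_const_mul_self ρ (fun s : ℝ ↦ s ^ (-ρ) * Real.log s) atTop)
  all_goals
    filter_upwards [eventually_gt_atTop 0] with s hs
    simp only [Function.comp_apply, mul_one, Real.rpow_one, Real.log_rpow hs, ← Real.rpow_mul hs.le]
  · push_cast
    rw [mul_comm ρ 2]
    ring
  · rw [mul_neg_one]
    ring

end HasStdExpansion

section LaplaceType

variable {u m : ℝ → ℂ} {c d : ℝ}

lemma isBigO_integral_comp_mul {f : ℂ → ℂ}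
    (hf : f =O[cobounded ℂ ⊓ 𝓟 {w | 0 ≤ w.re}] fun w ↦ w⁻¹)
    (hu : ContinuousOn u [[c, d]]) (hm : ContinuousOn m [[c, d]])
    (hre : ∀ x ∈ [[c, d]], 0 ≤ (u x).re) (hne : ∀ x ∈ [[c, d]], u x ≠ 0) :
    (fun σ : ℝ ↦ ∫ x in c..d, f (σ * u x) * m x) =O[atTop] fun σ ↦ σ⁻¹ := by
  obtain ⟨C, hC⟩ := hf.bound
  obtain ⟨r, -, hr⟩ := (hasBasis_cobounded_norm.inf_principal _).eventually_iff.mp hC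
  obtain ⟨M, hM⟩ := isCompact_uIcc.exists_bound_of_continuousOn ((hu.inv₀ hne).mul hm)
  obtain ⟨N, hN⟩ := isCompact_uIcc.exists_bound_of_continuousOn (hu.inv₀ hne)
  refine .of_bound (|C| * M * |d - c|) ?_
  filter_upwards [eventually_gt_atTop 0, eventually_ge_atTop (r * N)] with σ hσ hσr
  have hbound (x : ℝ) (hx : x ∈ [[c, d]]) : ‖f (σ * u x) * m x‖ ≤ |C| * M * σ⁻¹ := by
    have hu_pos : 0 < ‖u x‖ := norm_pos_iff.mpr (hne x hx)
    have hnorm : ‖(σ : ℂ) * u x‖ = σ * ‖u x‖ := by rw [norm_mul, Complex.norm_of_nonneg hσ.le]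
    have hlarge : r ≤ ‖(σ : ℂ) * u x‖ := by
      have hN' : 1 ≤ N * ‖u x‖ := by
        have := hN x hx
        rwa [Pi.inv_apply, norm_inv, inv_le_iff_one_le_mul₀ hu_pos] at this
      rw [hnorm]
      rcases le_total r 0 with hr₀ | hr₀
      · exact hr₀.trans (by positivity)
      calc r ≤ r * (N * ‖u x‖) := le_mul_of_one_le_right hr₀ hN'
        _ = r * N * ‖u x‖ := by ring
        _ ≤ σ * ‖u x‖ := by gcongr
    have hfx := hr ⟨hlarge, by
      rw [Set.mem_ofPred_eq, re_ofReal_mul]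
      exact mul_nonneg hσ.le (hre x hx)⟩
    calc ‖f (σ * u x) * m x‖ ≤ |C| * ‖((σ : ℂ) * u x)⁻¹‖ * ‖m x‖ := by
          rw [norm_mul]
          gcongr
          exact hfx.trans (by gcongr; exact le_abs_self C)
      _ = |C| * ‖(u x)⁻¹ * m x‖ * σ⁻¹ := by
          rw [norm_inv, hnorm, norm_mul, norm_inv]
          field_simp
      _ ≤ |C| * M * σ⁻¹ := by gcongr; exact hM x hx
  refine (intervalIntegral.norm_integral_le_of_norm_le_const fun x hx ↦
    hbound x (Set.uIoc_subset_uIcc hx)).trans_eq ?_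
  rw [Real.norm_of_nonneg (by positivity)]
  ring

lemma isBigO_inv_rpow_neg_one_mul_log :
    (fun σ : ℝ ↦ σ⁻¹) =O[atTop] fun σ ↦ σ ^ (-1 : ℝ) * Real.log σ := by
  refine .of_bound 1 ?_
  filter_upwards [Real.tendsto_log_atTop.eventually_ge_atTop 1] with σ hσ
  rw [Real.rpow_neg_one, norm_mul, one_mul]
  exact le_mul_of_one_le_right (norm_nonneg _) (hσ.trans (le_abs_self _))

lemma continuousOn_stirlingForm (β δ B K : ℂ) : ContinuousOn (stirlingForm β δ B K) slitPlane := by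
  have hlog : ContinuousOn log slitPlane := fun w hw ↦ (continuousAt_clog hw).continuousWithinAt
  unfold stirlingForm
  fun_prop

lemma continuousOn_stirlingForm_comp_mul {s : Set ℝ} (β δ B K : ℂ) (hu : ContinuousOn u s)
    (hre : ∀ x ∈ s, 0 ≤ (u x).re) (hne : ∀ x ∈ s, u x ≠ 0) {σ : ℝ} (hσ : 0 < σ) :
    ContinuousOn (fun x ↦ stirlingForm β δ B K (σ * u x)) s :=
  (continuousOn_stirlingForm β δ B K).comp (by fun_prop) fun x hx ↦ mem_slitPlane_of_re_nonneg
    (by rw [re_ofReal_mul]; exact mul_nonneg hσ.le (hre x hx))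
    (mul_ne_zero (ofReal_ne_zero.mpr hσ.ne') (hne x hx))

lemma integral_stirlingForm_comp_mul (β δ B K : ℂ) (hu : ContinuousOn u [[c, d]])
    (hm : ContinuousOn m [[c, d]]) (hre : ∀ x ∈ [[c, d]], 0 ≤ (u x).re)
    (hne : ∀ x ∈ [[c, d]], u x ≠ 0) {σ : ℝ} (hσ : 0 < σ) :
    ∫ x in c..d, stirlingForm β δ B K (σ * u x) * m x
      = σ ^ 2 * Real.log σ * (∫ x in c..d, u x ^ 2 / 2 * m x)
        + σ ^ 2 * (∫ x in c..d, (u x ^ 2 / 2 * log (u x) - 3 / 4 * u x ^ 2) * m x)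
        + σ * Real.log σ * (∫ x in c..d, β * u x * m x)
        + σ * (∫ x in c..d, (β * u x * log (u x) + B * u x) * m x)
        + Real.log σ * (∫ x in c..d, δ * m x)
        + ∫ x in c..d, (δ * log (u x) + K) * m x := by
  have hlog : ContinuousOn (fun x ↦ log (u x)) [[c, d]] := hu.clog fun x hx ↦
    mem_slitPlane_of_re_nonneg (hre x hx) (hne x hx)
  have hint {g : ℝ → ℂ} (hg : ContinuousOn g [[c, d]]) : IntervalIntegrable g volume c d :=
    hg.intervalIntegrable
  simp_rw [← intervalIntegral.integral_const_mul]
  iterate 5 rw [← intervalIntegral.integral_add (hint (by fun_prop)) (hint (by fun_prop))]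
  refine intervalIntegral.integral_congr fun x hx ↦ ?_
  simp only [stirlingForm, log_ofReal_mul hσ (hne x hx)]
  ring

lemma hasStdExpansion_integral_comp_mul {f : ℂ → ℂ} {β δ B K : ℂ}
    (hf : (fun w ↦ f w - stirlingForm β δ B K w)
      =O[cobounded ℂ ⊓ 𝓟 {w | 0 ≤ w.re}] fun w ↦ w⁻¹)
    (hf_cont : ContinuousOn f {w | 0 ≤ w.re})
    (hu : ContinuousOn u [[c, d]]) (hm : ContinuousOn m [[c, d]])
    (hre : ∀ x ∈ [[c, d]], 0 ≤ (u x).re) (hne : ∀ x ∈ [[c, d]], u x ≠ 0) :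
    HasStdExpansion 1 (fun σ ↦ ∫ x in c..d, f (σ * u x) * m x)
      (∫ x in c..d, (δ * log (u x) + K) * m x) := by
  refine ⟨∫ x in c..d, u x ^ 2 / 2 * m x,
    ∫ x in c..d, (u x ^ 2 / 2 * log (u x) - 3 / 4 * u x ^ 2) * m x, 0,
    ∫ x in c..d, β * u x * m x, ∫ x in c..d, (β * u x * log (u x) + B * u x) * m x, 0,
    ∫ x in c..d, δ * m x, ((isBigO_integral_comp_mul hf hu hm hre hne).trans
      isBigO_inv_rpow_neg_one_mul_log).congr' ?_ .rfl⟩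
  filter_upwards [eventually_gt_atTop 0] with σ hσ
  have hfσ : ContinuousOn (fun x ↦ f (σ * u x)) [[c, d]] :=
    hf_cont.comp (by fun_prop) fun x hx ↦ by
      rw [Set.mem_ofPred_eq, re_ofReal_mul]
      exact mul_nonneg hσ.le (hre x hx)
  have hform := continuousOn_stirlingForm_comp_mul β δ B K hu hre hne hσ
  simp_rw [sub_mul (f _)]
  rw [intervalIntegral.integral_sub (hfσ.fun_mul hm).intervalIntegrable
    (hform.fun_mul hm).intervalIntegrable, integral_stirlingForm_comp_mul β δ B K hu hm hre hne hσ]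
  simp only [mul_one, Real.rpow_two, Real.rpow_one, ofReal_pow]
  ring

end LaplaceType

/-! ### Moments of the arcsine -/

lemma abs_mul_sin_lt_one {k : ℝ} (hk : |k| < 1) (x : ℝ) : |k * Real.sin x| < 1 := by
  rw [abs_mul]
  exact (mul_le_of_le_one_right (abs_nonneg k) (Real.abs_sin_le_one x)).trans_lt hk

lemma one_sub_sq_pos {y : ℝ} (hy : |y| < 1) : 0 < 1 - y ^ 2 :=
  sub_pos.mpr ((sq_lt_one_iff_abs_lt_one y).mpr hy)

lemma hasDerivAt_integral_comp_mul_sin {h h' : ℝ → ℝ}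
    (hh : ∀ y ∈ Set.Ioo (-1 : ℝ) 1, HasDerivAt h (h' y) y)
    (hh' : ContinuousOn h' (Set.Ioo (-1) 1)) {k : ℝ} (hk : |k| < 1) (a b : ℝ) :
    HasDerivAt (fun k ↦ ∫ x in a..b, h (k * Real.sin x))
      (∫ x in a..b, h' (k * Real.sin x) * Real.sin x) k := by
  obtain ⟨K, hkK, hK⟩ := exists_between hk
  obtain ⟨M, hM⟩ := isCompact_Icc.exists_bound_of_continuousOn (s := Set.Icc (-K) K) <|
    hh'.mono (Set.Icc_subset_Ioo (by linarith) hK)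
  have hmem {l : ℝ} (hl : |l| < 1) (x : ℝ) : l * Real.sin x ∈ Set.Ioo (-1 : ℝ) 1 :=
    abs_lt.mp (abs_mul_sin_lt_one hl x)
  have hh_cont : ContinuousOn h (Set.Ioo (-1) 1) := fun y hy ↦
    (hh y hy).continuousAt.continuousWithinAt
  have hcont {l : ℝ} (hl : |l| < 1) : Continuous fun x ↦ h (l * Real.sin x) :=
    hh_cont.comp_continuous (by fun_prop) (hmem hl)
  have hnhds : Set.Ioo (-K) K ∈ 𝓝 k := Ioo_mem_nhds (abs_lt.mp hkK).1 (abs_lt.mp hkK).2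
  have hlt {l : ℝ} (hl : l ∈ Set.Ioo (-K) K) : |l| < 1 := (abs_lt.mpr hl).trans hK
  refine (intervalIntegral.hasDerivAt_integral_of_dominated_loc_of_deriv_le (bound := fun _ ↦ M)
    (F' := fun l x ↦ h' (l * Real.sin x) * Real.sin x) hnhds ?_
    ((hcont hk).intervalIntegrable a b) ?_ ?_ intervalIntegrable_const ?_).2
  · filter_upwards [hnhds] with l hl using (hcont (hlt hl)).aestronglyMeasurable
  · exact ((hh'.comp_continuous (by fun_prop) (hmem hk)).mul
      Real.continuous_sin).aestronglyMeasurable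
  · refine .of_forall fun x _ l hl ↦ ?_
    have hl_mem : l * Real.sin x ∈ Set.Icc (-K) K := by
      rw [Set.mem_Icc, ← abs_le, abs_mul]
      exact (mul_le_of_le_one_right (abs_nonneg l) (Real.abs_sin_le_one x)).trans
        (abs_lt.mpr hl).le
    rw [norm_mul]
    exact (mul_le_of_le_one_right (norm_nonneg _) (Real.abs_sin_le_one x)).trans (hM _ hl_mem)
  · exact .of_forall fun x _ l hl ↦ (hh _ (hmem (hlt hl) x)).comp l (hasDerivAt_mul_const _)

/-- The function `arcsin y / √(1 - y²)`, which solves `(1 - y²) H' = 1 + y H` on `(-1, 1)`. -/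
def arcsinDivSqrt (y : ℝ) : ℝ := Real.arcsin y / √(1 - y ^ 2)

/-- The derivative of `arcsinDivSqrt` on `(-1, 1)`. -/
def arcsinDivSqrtDeriv (y : ℝ) : ℝ := (1 + y * arcsinDivSqrt y) / (1 - y ^ 2)

lemma hasDerivAt_arcsinDivSqrt {y : ℝ} (hy : |y| < 1) :
    HasDerivAt arcsinDivSqrt (arcsinDivSqrtDeriv y) y := by
  have hpos := one_sub_sq_pos hy
  have hsqrt := Real.sqrt_pos.mpr hpos
  have hsq := Real.sq_sqrt hpos.le
  refine ((Real.hasDerivAt_arcsin (abs_lt.mp hy).1.ne' (abs_lt.mp hy).2.ne).div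
    (((hasDerivAt_pow 2 y).const_sub 1).sqrt hpos.ne') hsqrt.ne').congr_deriv ?_
  rw [arcsinDivSqrtDeriv, arcsinDivSqrt, hsq]
  field_simp
  push_cast
  ring

lemma one_sub_sq_mul_arcsinDivSqrtDeriv {y : ℝ} (hy : |y| < 1) :
    (1 - y ^ 2) * arcsinDivSqrtDeriv y = 1 + y * arcsinDivSqrt y :=
  mul_div_cancel₀ _ (one_sub_sq_pos hy).ne'

section Moments

variable {k : ℝ} (hk : |k| < 1)
include hk

lemma continuous_arcsinDivSqrt_mul_sin :
    Continuous fun x ↦ arcsinDivSqrt (k * Real.sin x) :=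
  continuous_iff_continuousAt.mpr fun x ↦ ContinuousAt.comp (f := fun x ↦ k * Real.sin x)
    (hasDerivAt_arcsinDivSqrt (abs_mul_sin_lt_one hk x)).continuousAt (by fun_prop)

lemma continuous_arcsinDivSqrtDeriv_mul_sin :
    Continuous fun x ↦ arcsinDivSqrtDeriv (k * Real.sin x) := by
  have := continuous_arcsinDivSqrt_mul_sin hk
  exact .div (by fun_prop) (by fun_prop) fun x ↦ (one_sub_sq_pos (abs_mul_sin_lt_one hk x)).ne'

-- The integrand is the derivative of `cos x * H (k * sin x)`, which vanishes at `± π / 2`.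
lemma integral_arcsinDivSqrt_by_parts :
    ∫ x in -(Real.pi / 2)..Real.pi / 2, (k * Real.cos x ^ 2 * arcsinDivSqrtDeriv (k * Real.sin x)
      - Real.sin x * arcsinDivSqrt (k * Real.sin x)) = 0 := by
  have hderiv (x : ℝ) : HasDerivAt (fun x ↦ Real.cos x * arcsinDivSqrt (k * Real.sin x))
      (k * Real.cos x ^ 2 * arcsinDivSqrtDeriv (k * Real.sin x)
        - Real.sin x * arcsinDivSqrt (k * Real.sin x)) x := by
    refine ((Real.hasDerivAt_cos x).fun_mul ((hasDerivAt_arcsinDivSqrt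
      (abs_mul_sin_lt_one hk x)).comp x ((Real.hasDerivAt_sin x).const_mul k))).congr_deriv ?_
    simp only [Function.comp_apply]
    ring
  have h₁ := continuous_arcsinDivSqrt_mul_sin hk
  have h₂ := continuous_arcsinDivSqrtDeriv_mul_sin hk
  rw [intervalIntegral.integral_eq_sub_of_hasDerivAt (fun x _ ↦ hderiv x)
    ((by fun_prop : Continuous _).intervalIntegrable _ _)]
  simp

lemma integral_arcsinDivSqrtDeriv_mul_sin :
    ∫ x in -(Real.pi / 2)..Real.pi / 2, arcsinDivSqrtDeriv (k * Real.sin x)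
      = Real.pi / (1 - k ^ 2) := by
  have hpointwise (x : ℝ) : (1 - k ^ 2) * arcsinDivSqrtDeriv (k * Real.sin x)
      = 1 - k * (k * Real.cos x ^ 2 * arcsinDivSqrtDeriv (k * Real.sin x)
        - Real.sin x * arcsinDivSqrt (k * Real.sin x)) := by
    linear_combination one_sub_sq_mul_arcsinDivSqrtDeriv (abs_mul_sin_lt_one hk x)
      + k ^ 2 * arcsinDivSqrtDeriv (k * Real.sin x) * Real.cos_sq' x
  have h₁ := continuous_arcsinDivSqrt_mul_sin hk
  have h₂ := continuous_arcsinDivSqrtDeriv_mul_sin hk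
  rw [eq_div_iff (one_sub_sq_pos hk).ne', mul_comm, ← intervalIntegral.integral_const_mul]
  simp_rw [hpointwise]
  rw [intervalIntegral.integral_sub intervalIntegrable_const
    ((by fun_prop : Continuous _).intervalIntegrable _ _), intervalIntegral.integral_const_mul,
    integral_arcsinDivSqrt_by_parts hk, intervalIntegral.integral_const]
  simp

lemma hasDerivAt_integral_mul_arcsinDivSqrt :
    HasDerivAt (fun k ↦ ∫ x in -(Real.pi / 2)..Real.pi / 2,
      k * Real.sin x * arcsinDivSqrt (k * Real.sin x)) (k * (Real.pi / (1 - k ^ 2))) k := by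
  have hderiv (y : ℝ) (hy : y ∈ Set.Ioo (-1 : ℝ) 1) :
      HasDerivAt (fun y ↦ y * arcsinDivSqrt y) (arcsinDivSqrt y + y * arcsinDivSqrtDeriv y) y := by
    simpa only [one_mul] using
      (hasDerivAt_id' y).fun_mul (hasDerivAt_arcsinDivSqrt (abs_lt.mpr hy))
  have hcont : ContinuousOn arcsinDivSqrt (Set.Ioo (-1) 1) := fun y hy ↦
    (hasDerivAt_arcsinDivSqrt (abs_lt.mpr hy)).continuousAt.continuousWithinAt
  have hcont' : ContinuousOn arcsinDivSqrtDeriv (Set.Ioo (-1) 1) :=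
    .div (by fun_prop) (by fun_prop) fun y hy ↦
      (one_sub_sq_pos (abs_lt.mpr hy)).ne'
  refine (hasDerivAt_integral_comp_mul_sin hderiv (by fun_prop) hk _ _).congr_deriv ?_
  have h₁ := continuous_arcsinDivSqrt_mul_sin hk
  have h₂ := continuous_arcsinDivSqrtDeriv_mul_sin hk
  rw [← integral_arcsinDivSqrtDeriv_mul_sin hk, ← intervalIntegral.integral_const_mul,
    ← sub_zero (∫ x in _.._, k * _), ← integral_arcsinDivSqrt_by_parts hk,
    ← intervalIntegral.integral_sub ((by fun_prop : Continuous _).intervalIntegrable _ _)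
      ((by fun_prop : Continuous _).intervalIntegrable _ _)]
  refine intervalIntegral.integral_congr fun x _ ↦ ?_
  simp only [Real.cos_sq']
  ring

lemma integral_mul_arcsinDivSqrt_mul_sin :
    ∫ x in -(Real.pi / 2)..Real.pi / 2, k * Real.sin x * arcsinDivSqrt (k * Real.sin x)
      = -(Real.pi / 2) * Real.log (1 - k ^ 2) := by
  have hlog (l : ℝ) (hl : l ∈ Set.Ioo (-1 : ℝ) 1) :
      HasDerivAt (fun l ↦ -(Real.pi / 2) * Real.log (1 - l ^ 2))
        (l * (Real.pi / (1 - l ^ 2))) l := by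
    have hl' := (one_sub_sq_pos (abs_lt.mpr hl)).ne'
    refine ((((hasDerivAt_pow 2 l).const_sub 1).log hl').const_mul _).congr_deriv ?_
    field_simp
    push_cast
    ring
  have hint (l : ℝ) (hl : l ∈ Set.Ioo (-1 : ℝ) 1) :=
    hasDerivAt_integral_mul_arcsinDivSqrt (abs_lt.mpr hl)
  refine isOpen_Ioo.eqOn_of_deriv_eq isPreconnected_Ioo
    (fun l hl ↦ (hint l hl).differentiableAt.differentiableWithinAt)
    (fun l hl ↦ (hlog l hl).differentiableAt.differentiableWithinAt)
    (fun l hl ↦ (hint l hl).deriv.trans (hlog l hl).deriv.symm)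
    (show (0 : ℝ) ∈ Set.Ioo (-1) 1 by simp) ?_ (abs_lt.mp hk)
  simp

end Moments

/-! ### Integration along the arc -/

/-- The substitution `θ = π / 2 + 2 * arcHalfAngle k x` with `x ∈ [-π / 2, π / 2]` parametrizes the
arc `|θ - π / 2| ≤ 2 * arcsin k` and removes the square root singularities of `rBranch` at its
endpoints. -/
def arcHalfAngle (k x : ℝ) : ℝ := Real.arcsin (k * Real.sin x)

/-- The density with respect to `i dx` of the form `(1 - i Im b₂ / ζ) dζ / r(ζ)` on the arc, in the
parameter of `arcHalfAngle`. -/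
def arcDensity (k x : ℝ) : ℂ := 2 * k ^ 2 + I * ((2 - 2 * k ^ 2) * Real.tan (arcHalfAngle k x))

lemma continuous_arcHalfAngle (k : ℝ) : Continuous (arcHalfAngle k) :=
  Real.continuous_arcsin.comp (by fun_prop)

lemma monotoneOn_arcHalfAngle {k : ℝ} (hk : 0 ≤ k) :
    MonotoneOn (arcHalfAngle k) (Set.Icc (-(Real.pi / 2)) (Real.pi / 2)) := fun _ hx _ hy hxy ↦
  Real.monotone_arcsin <| mul_le_mul_of_nonneg_left
    (Real.strictMonoOn_sin.monotoneOn hx hy hxy) hk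

lemma odd_arcHalfAngle (k : ℝ) : Function.Odd (arcHalfAngle k) := fun x ↦ by
  simp [arcHalfAngle]

lemma intervalIntegral_eq_zero_of_odd {E : Type*} [NormedAddCommGroup E] [NormedSpace ℝ E]
    {f : ℝ → E} (hf : Function.Odd f) (b : ℝ) : ∫ x in -b..b, f x = 0 := by
  have : IsAddTorsionFree E := .of_isTorsionFree ℝ E
  refine self_eq_neg.mp ?_
  calc ∫ x in -b..b, f x = ∫ x in -b..b, f (-x) := by
        rw [intervalIntegral.integral_comp_neg, neg_neg]
    _ = -∫ x in -b..b, f x := by simp only [hf _, intervalIntegral.integral_neg]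

section

variable {k : ℝ} (hk : |k| < 1)
include hk

lemma arcHalfAngle_mem_Ioo (x : ℝ) :
    arcHalfAngle k x ∈ Set.Ioo (-(Real.pi / 2)) (Real.pi / 2) :=
  have h := abs_lt.mp (abs_mul_sin_lt_one hk x)
  ⟨Real.neg_pi_div_two_lt_arcsin.mpr h.1, Real.arcsin_lt_pi_div_two.mpr h.2⟩

lemma cos_arcHalfAngle_pos (x : ℝ) : 0 < Real.cos (arcHalfAngle k x) :=
  Real.cos_pos_of_mem_Ioo (arcHalfAngle_mem_Ioo hk x)

lemma hasDerivAt_arcHalfAngle (x : ℝ) :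
    HasDerivAt (arcHalfAngle k) (k * Real.cos x / Real.cos (arcHalfAngle k x)) x := by
  have h := abs_lt.mp (abs_mul_sin_lt_one hk x)
  refine ((Real.hasDerivAt_arcsin h.1.ne' h.2.ne).comp x
    ((Real.hasDerivAt_sin x).const_mul k)).congr_deriv ?_
  rw [arcHalfAngle, Real.cos_arcsin]
  ring

lemma continuous_tan_arcHalfAngle : Continuous fun x ↦ Real.tan (arcHalfAngle k x) :=
  continuous_iff_continuousAt.mpr fun x ↦
    (Real.continuousAt_tan.mpr (cos_arcHalfAngle_pos hk x).ne').comp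
      (continuous_arcHalfAngle k).continuousAt

lemma continuous_arcDensity : Continuous (arcDensity k) := by
  have := continuous_tan_arcHalfAngle hk
  unfold arcDensity
  fun_prop

lemma arcDensity_eq (x : ℝ) :
    arcDensity k x = (exp (arcHalfAngle k x * I) - (1 - 2 * k ^ 2) * (exp (arcHalfAngle k x * I))⁻¹)
      / Real.cos (arcHalfAngle k x) := by
  have hcos : (Real.cos (arcHalfAngle k x) : ℂ) ≠ 0 :=
    ofReal_ne_zero.mpr (cos_arcHalfAngle_pos hk x).ne'
  rw [eq_div_iff hcos, arcDensity, ← exp_neg, ← neg_mul, exp_mul_I, exp_mul_I, cos_neg, sin_neg,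
    Real.tan_eq_sin_div_cos]
  push_cast at hcos ⊢
  field_simp
  ring

lemma integral_eq_integral_arcHalfAngle (hk₀ : 0 ≤ k) {E : Type*} [NormedAddCommGroup E]
    [NormedSpace ℝ E] (g : ℝ → E) :
    ∫ θ in Real.pi / 2 - 2 * Real.arcsin k..Real.pi / 2 + 2 * Real.arcsin k, g θ
      = ∫ x in -(Real.pi / 2)..Real.pi / 2, (2 * (k * Real.cos x / Real.cos (arcHalfAngle k x))) •
          g (Real.pi / 2 + 2 * arcHalfAngle k x) := by
  have hpi : -(Real.pi / 2) ≤ Real.pi / 2 := by linarith [Real.pi_pos]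
  have hmono : MonotoneOn (fun x ↦ Real.pi / 2 + 2 * arcHalfAngle k x)
      (Set.Icc (-(Real.pi / 2)) (Real.pi / 2)) := fun x hx y hy hxy ↦ by
    have := monotoneOn_arcHalfAngle hk₀ hx hy hxy
    dsimp only
    gcongr
  have himage := ContinuousOn.image_Icc_of_monotoneOn hpi
    (((continuous_arcHalfAngle k).const_mul 2).const_add _).continuousOn hmono
  have hends : arcHalfAngle k (-(Real.pi / 2)) = -Real.arcsin k ∧
      arcHalfAngle k (Real.pi / 2) = Real.arcsin k := by
    simp [arcHalfAngle]
  rw [hends.1, hends.2, mul_neg, ← sub_eq_add_neg] at himage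
  rw [intervalIntegral.integral_of_le (by linarith [Real.arcsin_nonneg.mpr hk₀]),
    intervalIntegral.integral_of_le hpi, ← integral_Icc_eq_integral_Ioc,
    ← integral_Icc_eq_integral_Ioc, ← himage]
  exact integral_image_eq_integral_deriv_smul_of_monotoneOn measurableSet_Icc
    (fun x _ ↦ (((hasDerivAt_arcHalfAngle hk x).const_mul 2).const_add _).hasDerivWithinAt) hmono g

lemma integral_arcDensity :
    ∫ x in -(Real.pi / 2)..Real.pi / 2, arcDensity k x = 2 * k ^ 2 * Real.pi := by
  have htan := continuous_tan_arcHalfAngle hk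
  have hodd : ∫ x in -(Real.pi / 2)..Real.pi / 2,
      I * ((2 - 2 * k ^ 2) * Real.tan (arcHalfAngle k x)) = 0 :=
    intervalIntegral_eq_zero_of_odd (fun x ↦ by simp [odd_arcHalfAngle k x]) _
  unfold arcDensity
  rw [intervalIntegral.integral_add intervalIntegrable_const
    ((by fun_prop : Continuous _).intervalIntegrable _ _), hodd, intervalIntegral.integral_const]
  simp [mul_comm]

lemma integral_arcHalfAngle_mul_tan :
    ∫ x in -(Real.pi / 2)..Real.pi / 2, arcHalfAngle k x * Real.tan (arcHalfAngle k x)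
      = -(Real.pi / 2) * Real.log (1 - k ^ 2) := by
  rw [← integral_mul_arcsinDivSqrt_mul_sin hk]
  refine intervalIntegral.integral_congr fun x _ ↦ ?_
  simp only [arcHalfAngle, arcsinDivSqrt, Real.tan_arcsin]
  ring

lemma integral_arcHalfAngle_mul_arcDensity :
    ∫ x in -(Real.pi / 2)..Real.pi / 2, 2 * arcHalfAngle k x * I * arcDensity k x
      = (2 - 2 * k ^ 2) * Real.pi * Real.log (1 - k ^ 2) := by
  have htan := continuous_tan_arcHalfAngle hk
  have hangle := continuous_arcHalfAngle k
  have hodd : ∫ x in -(Real.pi / 2)..Real.pi / 2, 4 * k ^ 2 * I * arcHalfAngle k x = 0 :=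
    intervalIntegral_eq_zero_of_odd (fun x ↦ by simp [odd_arcHalfAngle k x]) _
  have hsplit (x : ℝ) : 2 * arcHalfAngle k x * I * arcDensity k x = 4 * k ^ 2 * I * arcHalfAngle k x
      - 2 * (2 - 2 * k ^ 2) * ((arcHalfAngle k x * Real.tan (arcHalfAngle k x) : ℝ) : ℂ) := by
    rw [arcDensity, ofReal_mul]
    linear_combination 2 * arcHalfAngle k x * (2 - 2 * k ^ 2) * Real.tan (arcHalfAngle k x) * I_sq
  simp_rw [hsplit]
  rw [intervalIntegral.integral_sub ((by fun_prop : Continuous _).intervalIntegrable _ _)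
    ((by fun_prop : Continuous _).intervalIntegrable _ _), hodd,
    intervalIntegral.integral_const_mul, intervalIntegral.integral_ofReal,
    integral_arcHalfAngle_mul_tan hk]
  push_cast
  ring

end

/-- The rotated point `ζ / (i R)` of the unit circle, for `ζ` on an arc of radius `R`, in the
parameter of `arcHalfAngle`. -/
def arcPoint (k x : ℝ) : ℂ := exp (2 * arcHalfAngle k x * I)

lemma arcPoint_ne_zero (k x : ℝ) : arcPoint k x ≠ 0 := exp_ne_zero _

lemma continuous_arcPoint (k : ℝ) : Continuous (arcPoint k) := by
  have := continuous_arcHalfAngle k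
  unfold arcPoint
  fun_prop

lemma arcPoint_eq_sq (k x : ℝ) : arcPoint k x = exp (arcHalfAngle k x * I) ^ 2 := by
  rw [arcPoint, ← exp_nat_mul]
  congr 1
  push_cast
  ring

lemma re_inv_exp_ofReal_mul_I (θ : ℝ) : ((exp (θ * I))⁻¹).re = Real.cos θ := by
  rw [← exp_neg, ← neg_mul, ← ofReal_neg, exp_ofReal_mul_I_re, Real.cos_neg]

lemma cos_two_mul_arcsin {y : ℝ} (hy : |y| ≤ 1) :
    Real.cos (2 * Real.arcsin y) = 1 - 2 * y ^ 2 := by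
  rw [Real.cos_two_mul', Real.cos_sq', Real.sin_arcsin (abs_le.mp hy).1 (abs_le.mp hy).2]
  ring

section

variable {k : ℝ} (hk : |k| < 1)
include hk

lemma cos_two_mul_arcHalfAngle (x : ℝ) :
    Real.cos (2 * arcHalfAngle k x) = 1 - 2 * (k * Real.sin x) ^ 2 :=
  cos_two_mul_arcsin (abs_mul_sin_lt_one hk x).le

lemma arcPoint_re (x : ℝ) : (arcPoint k x).re = 1 - 2 * (k * Real.sin x) ^ 2 := by
  rw [← cos_two_mul_arcHalfAngle hk, ← exp_ofReal_mul_I_re, arcPoint]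
  push_cast
  rfl

lemma arcPoint_re_nonneg (hk₂ : 2 * k ^ 2 ≤ 1) (x : ℝ) : 0 ≤ (arcPoint k x).re := by
  have : (k * Real.sin x) ^ 2 ≤ k ^ 2 := by
    rw [mul_pow]
    exact mul_le_of_le_one_right (sq_nonneg k) (Real.sin_sq_le_one x)
  rw [arcPoint_re hk]
  linarith

lemma arcPoint_add_inv (x : ℝ) :
    arcPoint k x + (arcPoint k x)⁻¹ = 2 * (1 - 2 * (k * Real.sin x) ^ 2) := by
  have h : cos (2 * arcHalfAngle k x) = 1 - 2 * (k * Real.sin x) ^ 2 :=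
    mod_cast cos_two_mul_arcHalfAngle hk x
  rw [← h, two_cos, arcPoint, ← exp_neg, neg_mul]

lemma log_ofReal_mul_arcPoint {R : ℝ} (hR : 0 < R) (x : ℝ) :
    log (R * arcPoint k x) = Real.log R + 2 * arcHalfAngle k x * I := by
  have h := arcHalfAngle_mem_Ioo hk x
  have him : (2 * arcHalfAngle k x * I).im = 2 * arcHalfAngle k x := by simp
  rw [log_ofReal_mul hR (arcPoint_ne_zero k x), arcPoint, log_exp]
  · rw [him]
    linarith [h.1]
  · rw [him]
    linarith [h.2]

lemma arcIntegral_eq_integral_arcPoint (hk₀ : 0 ≤ k) (R : ℝ) (f : ℂ → ℂ) :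
    arcIntegral R (Real.pi / 2 - 2 * Real.arcsin k) f
      = ∫ x in -(Real.pi / 2)..Real.pi / 2,
          ((2 * (k * Real.cos x / Real.cos (arcHalfAngle k x)) : ℝ) : ℂ) *
            (f (I * (R * arcPoint k x)) * (I * (I * (R * arcPoint k x)))) := by
  have hexp (x : ℝ) : exp ((Real.pi / 2 + 2 * arcHalfAngle k x : ℝ) * I) = I * arcPoint k x := by
    rw [arcPoint, ofReal_add, add_mul, exp_add]
    push_cast
    rw [exp_pi_div_two_mul_I]
  have hsub : Real.pi - (Real.pi / 2 - 2 * Real.arcsin k) = Real.pi / 2 + 2 * Real.arcsin k := by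
    ring
  rw [arcIntegral, hsub, integral_eq_integral_arcHalfAngle hk hk₀]
  simp only [hexp, real_smul, mul_assoc, mul_left_comm]

end

section ArcIntegral

variable {r : ℝ} (hr : 0 < r)
include hr

lemma rhoOf_pos : 0 < rhoOf r := by
  unfold rhoOf
  positivity

lemma one_sub_rhoOf_pos : 0 < 1 - rhoOf r := by
  rw [rhoOf, sub_pos, div_lt_one (by positivity)]
  linarith

lemma abs_sqrt_rhoOf_lt_one : |√(rhoOf r)| < 1 := by
  rw [abs_of_nonneg (Real.sqrt_nonneg _), Real.sqrt_lt' one_pos, one_pow]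
  exact sub_pos.mp (one_sub_rhoOf_pos hr)

lemma sqrt_rhoOf_sq : √(rhoOf r) ^ 2 = rhoOf r := Real.sq_sqrt (rhoOf_pos hr).le

lemma abs_sub_one_div_add_one_lt_one : |(r - 1) / (r + 1)| < 1 := by
  rw [abs_lt, lt_div_iff₀ (by positivity), div_lt_one (by positivity)]
  constructor <;> linarith

lemma sin_phiOf : Real.sin (phiOf r) = 1 - 2 * rhoOf r := by
  have h := abs_lt.mp (abs_sub_one_div_add_one_lt_one hr)
  rw [phiOf, Real.sin_arcsin h.1.le h.2.le, rhoOf]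
  field_simp
  ring

lemma phiOf_eq : phiOf r = Real.pi / 2 - 2 * Real.arcsin √(rhoOf r) := by
  have hangle := Real.arcsin_nonneg.mpr (Real.sqrt_nonneg (rhoOf r))
  have hangle' := Real.arcsin_le_pi_div_two √(rhoOf r)
  refine Real.injOn_sin (Real.arcsin_mem_Icc _) ⟨by linarith, by linarith⟩ ?_
  rw [← phiOf, sin_phiOf hr, Real.sin_pi_div_two_sub,
    cos_two_mul_arcsin (abs_sqrt_rhoOf_lt_one hr).le, sqrt_rhoOf_sq hr]

lemma b2abs_pos : 0 < b2abs r := by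
  have h := abs_lt.mp (abs_sub_one_div_add_one_lt_one hr)
  have hcos : 0 < Real.cos (phiOf r) := Real.cos_pos_of_mem_Ioo
    ⟨Real.neg_pi_div_two_lt_arcsin.mpr h.1, Real.arcsin_lt_pi_div_two.mpr h.2⟩
  unfold b2abs
  positivity

lemma b2Of_im : (b2Of r).im = b2abs r * (1 - 2 * rhoOf r) := by
  rw [b2Of, im_ofReal_mul, exp_ofReal_mul_I_im, sin_phiOf hr]

lemma rBranch_eq {x : ℝ} (hx : 0 < Real.cos x) :
    rBranch r (I * (b2abs r * arcPoint √(rhoOf r) x))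
      = I * (b2abs r * arcPoint √(rhoOf r) x) *
        (2 * (√(rhoOf r) * Real.cos x) * (exp (arcHalfAngle √(rhoOf r) x * I))⁻¹) := by
  have hk := abs_sqrt_rhoOf_lt_one hr
  have hk₀ : 0 < √(rhoOf r) := Real.sqrt_pos.mpr (rhoOf_pos hr)
  have hsq : (√(rhoOf r) : ℂ) ^ 2 = rhoOf r := mod_cast sqrt_rhoOf_sq hr
  have hR : (b2abs r : ℂ) ≠ 0 := ofReal_ne_zero.mpr (b2abs_pos hr).ne'
  have hP₀ := arcPoint_ne_zero √(rhoOf r) x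
  have hre : 0 < (2 * (√(rhoOf r) * Real.cos x) * (exp (arcHalfAngle √(rhoOf r) x * I))⁻¹).re := by
    rw [← ofReal_mul, ← ofReal_ofNat 2, ← ofReal_mul, re_ofReal_mul, re_inv_exp_ofReal_mul_I]
    exact mul_pos (by positivity) (cos_arcHalfAngle_pos hk x)
  have hsquare : (2 * (√(rhoOf r) * Real.cos x) * (exp (arcHalfAngle √(rhoOf r) x * I))⁻¹) ^ 2
      = 1 - 2 * (1 - 2 * rhoOf r) * (arcPoint √(rhoOf r) x)⁻¹ + (arcPoint √(rhoOf r) x)⁻¹ ^ 2 := by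
    have hcos : (Real.cos x : ℂ) ^ 2 = 1 - Real.sin x ^ 2 := mod_cast Real.cos_sq' x
    rw [mul_pow, inv_pow, ← arcPoint_eq_sq]
    linear_combination 4 * √(rhoOf r) ^ 2 * (arcPoint √(rhoOf r) x)⁻¹ * hcos
      + 4 * (arcPoint √(rhoOf r) x)⁻¹ * hsq
      - (arcPoint √(rhoOf r) x)⁻¹ * arcPoint_add_inv hk x + mul_inv_cancel₀ hP₀
  rw [rBranch, b2Of_im hr, one_div, ← sq_cpow_two_inv hre, hsquare]
  congr 2
  field_simp
  rw [I_sq]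
  push_cast
  ring

lemma arcIntegral_mul_inv_rBranch (G : ℂ → ℂ) :
    arcIntegral (b2abs r) (phiOf r)
        (fun ζ ↦ G ζ * (1 - I * (b2Of r).im / ζ) * (rBranch r ζ)⁻¹)
      = I * ∫ x in -(Real.pi / 2)..Real.pi / 2,
          G (I * (b2abs r * arcPoint √(rhoOf r) x)) * arcDensity √(rhoOf r) x := by
  have hk := abs_sqrt_rhoOf_lt_one hr
  have hk₀ : (√(rhoOf r) : ℂ) ≠ 0 := ofReal_ne_zero.mpr (Real.sqrt_pos.mpr (rhoOf_pos hr)).ne'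
  have hR : (b2abs r : ℂ) ≠ 0 := ofReal_ne_zero.mpr (b2abs_pos hr).ne'
  have hsq : (√(rhoOf r) : ℂ) ^ 2 = rhoOf r := mod_cast sqrt_rhoOf_sq hr
  rw [phiOf_eq hr, arcIntegral_eq_integral_arcPoint hk (Real.sqrt_nonneg _),
    ← intervalIntegral.integral_const_mul]
  have hpi : -(Real.pi / 2) ≤ Real.pi / 2 := by linarith [Real.pi_pos]
  simp only [intervalIntegral.integral_of_le hpi, integral_Ioc_eq_integral_Ioo]
  refine setIntegral_congr_fun measurableSet_Ioo fun x hx ↦ ?_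
  have hcos := Real.cos_pos_of_mem_Ioo hx
  have hcos₀ : (Real.cos x : ℂ) ≠ 0 := ofReal_ne_zero.mpr hcos.ne'
  have hcos_angle : (Real.cos (arcHalfAngle √(rhoOf r) x) : ℂ) ≠ 0 :=
    ofReal_ne_zero.mpr (cos_arcHalfAngle_pos hk x).ne'
  have hE₀ := exp_ne_zero (arcHalfAngle √(rhoOf r) x * I)
  simp only [rBranch_eq hr hcos, arcDensity_eq hk, b2Of_im hr, hsq]
  generalize G _ = g
  rw [arcPoint_eq_sq]
  generalize exp (arcHalfAngle √(rhoOf r) x * I) = E at *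
  rw [ofReal_mul 2, ofReal_div, ofReal_mul √(rhoOf r), ofReal_mul (b2abs r)]
  field_simp
  push_cast
  ring

end ArcIntegral

/-! ### Asymptotics of `J` -/

lemma hasStdExpansion_integral_arcPoint {f : ℂ → ℂ} {β δ B K : ℂ}
    (hf : (fun w ↦ f w - stirlingForm β δ B K w)
      =O[cobounded ℂ ⊓ 𝓟 {w | 0 ≤ w.re}] fun w ↦ w⁻¹)
    (hf_cont : ContinuousOn f {w | 0 ≤ w.re}) {k : ℝ} (hk : |k| < 1) (hk₂ : 2 * k ^ 2 ≤ 1)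
    {R : ℝ} (hR : 0 < R) :
    HasStdExpansion 1
      (fun σ ↦ ∫ x in -(Real.pi / 2)..Real.pi / 2, f (σ * (R * arcPoint k x)) * arcDensity k x)
      ((δ * Real.log R + K) * (2 * k ^ 2 * Real.pi)
        + δ * ((2 - 2 * k ^ 2) * Real.pi * Real.log (1 - k ^ 2))) := by
  have hpoint := continuous_arcPoint k
  have hdensity := continuous_arcDensity hk
  have hangle := continuous_arcHalfAngle k
  convert hasStdExpansion_integral_comp_mul hf hf_cont (u := fun x ↦ R * arcPoint k x)
    (by fun_prop) hdensity.continuousOn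
    (fun x _ ↦ ?_) (fun x _ ↦ mul_ne_zero (ofReal_ne_zero.mpr hR.ne') (arcPoint_ne_zero k x))
    using 1
  · have hsplit (x : ℝ) : (δ * log (R * arcPoint k x) + K) * arcDensity k x
        = (δ * Real.log R + K) * arcDensity k x
          + δ * (2 * arcHalfAngle k x * I * arcDensity k x) := by
      rw [log_ofReal_mul_arcPoint hk hR]
      ring
    simp_rw [hsplit]
    rw [intervalIntegral.integral_add ((by fun_prop : Continuous _).intervalIntegrable _ _)
      ((by fun_prop : Continuous _).intervalIntegrable _ _), intervalIntegral.integral_const_mul,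
      intervalIntegral.integral_const_mul, integral_arcDensity hk,
      integral_arcHalfAngle_mul_arcDensity hk]
  · rw [re_ofReal_mul]
    exact mul_nonneg hR.le (arcPoint_re_nonneg hk hk₂ x)

lemma continuousOn_logGammaPrimitive_add {a : ℂ} (ha : 0 < a.re) :
    ContinuousOn (fun w ↦ logGammaPrimitive (a + w)) {w | 0 ≤ w.re} := fun w hw ↦
  have hre : 0 < (a + w).re := add_pos_of_pos_of_nonneg ha hw
  ((hasDerivAt_logGammaPrimitive hre).comp_const_add a w).continuousAt.continuousWithinAt

section Jfun

variable {r ν : ℝ}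

lemma two_mul_sqrt_rhoOf_sq_le_one (hr : 1 ≤ r) : 2 * √(rhoOf r) ^ 2 ≤ 1 := by
  rw [sqrt_rhoOf_sq (by linarith), rhoOf, mul_one_div, div_le_one (by linarith)]
  linarith

lemma PsiOf_I_mul (hν : -1 < ν) {s : ℝ} (hs : 0 ≤ s) {u : ℂ} (hu : 0 ≤ u.re) :
    PsiOf r ν s (I * u) = I * (logGammaPrimitive (((1 + ν) / 2 : ℝ) + (s ^ rhoOf r : ℝ) * u)
      - logGammaPrimitive ((1 + ν) / 2 : ℝ)) := by
  have ha : 0 < (((1 + ν) / 2 : ℝ) : ℂ).re := by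
    rw [ofReal_re]
    linarith
  have hw : 0 ≤ ((s ^ rhoOf r : ℝ) * u).re := by
    rw [re_ofReal_mul]
    positivity
  rw [← mul_integral_logGammaP_segment ha hw, PsiOf]
  have hsegment (t : ℝ) : (((1 + ν) / 2 : ℝ) : ℂ) - I * (s ^ rhoOf r : ℝ) * t * (I * u)
      = ((1 + ν) / 2 : ℝ) + t * ((s ^ rhoOf r : ℝ) * u) := by
    linear_combination -((s ^ rhoOf r : ℝ) : ℂ) * t * u * I_sq
  simp_rw [hsegment]
  ring

lemma Jfun_eq (hr : 1 ≤ r) (hν : -1 < ν) {s : ℝ} (hs : 0 ≤ s) :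
    Jfun r ν s = -((1 + r) / (2 * Real.pi)) * ∫ x in -(Real.pi / 2)..Real.pi / 2,
      (logGammaPrimitive (((1 + ν) / 2 : ℝ)
          + (s ^ rhoOf r : ℝ) * (b2abs r * arcPoint √(rhoOf r) x))
        - logGammaPrimitive ((1 + ν) / 2 : ℝ)) * arcDensity √(rhoOf r) x := by
  have hr₀ : 0 < r := by linarith
  have hre (x : ℝ) : 0 ≤ (b2abs r * arcPoint √(rhoOf r) x).re := by
    rw [re_ofReal_mul]
    exact mul_nonneg (b2abs_pos hr₀).le (arcPoint_re_nonneg (abs_sqrt_rhoOf_lt_one hr₀)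
      (two_mul_sqrt_rhoOf_sq_le_one hr) x)
  have hpi : (Real.pi : ℂ) ≠ 0 := ofReal_ne_zero.mpr Real.pi_ne_zero
  rw [Jfun, arcIntegral_mul_inv_rBranch hr₀]
  simp_rw [PsiOf_I_mul hν hs (hre _), mul_assoc I]
  rw [intervalIntegral.integral_const_mul]
  field_simp
  rw [I_sq]
  ring

lemma hasStdExpansion_Jfun (hr : 1 ≤ r) (hν : -1 < ν) {a : ℂ} (ha : a = ((1 + ν) / 2 : ℝ)) :
    HasStdExpansion (rhoOf r) (Jfun r ν)
      (((1 + r) / 2 : ℝ) * (logGammaPrimitive a + deriv riemannZeta (-1)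
          - a * Real.log (2 * Real.pi) / 2 - 1 / 12) * (2 * rhoOf r : ℝ)
        - ((1 + r) / 2 : ℝ) * (a ^ 2 / 2 - a / 2 + 1 / 12)
          * (2 * rhoOf r * Real.log (b2abs r)
            + (2 - 2 * rhoOf r) * Real.log (1 - rhoOf r) : ℝ)) := by
  have hr₀ : 0 < r := by linarith
  have hk := abs_sqrt_rhoOf_lt_one hr₀
  have ha₀ : 0 < a.re := by
    rw [ha, ofReal_re]
    linarith
  have hf : (fun w ↦ logGammaPrimitive (a + w) - logGammaPrimitive a
      - stirlingForm (a - 1 / 2) (a ^ 2 / 2 - a / 2 + 1 / 12)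
        (1 / 2 - a + Real.log (2 * Real.pi) / 2) (a * Real.log (2 * Real.pi) / 2 + 1 / 12
          - deriv riemannZeta (-1) - logGammaPrimitive a) w)
      =O[cobounded ℂ ⊓ 𝓟 {w | 0 ≤ w.re}] fun w ↦ w⁻¹ := by
    refine (isBigO_logGammaPrimitive_add_sub ha₀.le).congr_left fun w ↦ ?_
    simp only [stirlingForm]
    ring
  have hJ := ((hasStdExpansion_integral_arcPoint hf
    ((continuousOn_logGammaPrimitive_add ha₀).sub continuousOn_const) hk
    (two_mul_sqrt_rhoOf_sq_le_one hr) (b2abs_pos hr₀)).comp_rpow (rhoOf_pos hr₀)).const_mul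
    (-((1 + r) / (2 * Real.pi)))
  convert hJ.congr' ?_ using 1
  · have hpi : (Real.pi : ℂ) ≠ 0 := ofReal_ne_zero.mpr Real.pi_ne_zero
    have hsq : (√(rhoOf r) : ℂ) ^ 2 = rhoOf r := mod_cast sqrt_rhoOf_sq hr₀
    rw [hsq, sqrt_rhoOf_sq hr₀]
    push_cast
    field_simp
    ring
  · filter_upwards [eventually_ge_atTop 0] with s hs
    rw [Jfun_eq hr hν hs, ha]

end Jfun

/-- asymptotics of `I_{1,r}`. -/
theorem I1r_asymptotics (r ν : ℝ) (hr : 1 ≤ r) (hν : -1 < ν) :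
    HasStdExpansion (rhoOf r) (Jfun r ν)
      ((((1 + r) / 2 : ℝ) : ℂ) *
          ((((1 - 3 * ν ^ 2) / 24 : ℝ) : ℂ) + deriv riemannZeta (-1) -
            ((logBarnesG1p ((ν + 1) / 2 - 1) : ℝ) : ℂ) +
            (((ν - 1) / 2 * Real.log (Real.Gamma ((ν + 1) / 2)) : ℝ) : ℂ)) *
          (((1 - (b2Of r).im / b2abs r : ℝ) : ℂ)) +
        ((((1 + r) / 48 * (1 - 3 * ν ^ 2) *
            ((1 + (b2Of r).im / b2abs r) * Real.log ((b2abs r + (b2Of r).im) / 2) -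
              2 * ((b2Of r).im / b2abs r) * Real.log (b2abs r)) : ℝ)) : ℂ)) := by
  have hr₀ : 0 < r := by linarith
  have hR := b2abs_pos hr₀
  have hsin : (b2Of r).im / b2abs r = 1 - 2 * rhoOf r := by
    rw [b2Of_im hr₀, mul_div_cancel_left₀ _ hR.ne']
  have hlog : Real.log ((b2abs r + (b2Of r).im) / 2)
      = Real.log (b2abs r) + Real.log (1 - rhoOf r) := by
    rw [← Real.log_mul hR.ne' (one_sub_rhoOf_pos hr₀).ne', b2Of_im hr₀]
    ring_nf
  convert hasStdExpansion_Jfun hr hν rfl using 1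
  rw [hsin, hlog, add_comm ν, logGammaPrimitive_ofReal (by linarith)]
  push_cast
  ring
end
end

section
/- Let ν ≥ 0 and set m := (1+ν)/2. Then the series S := ∑_{n=0}^∞ [ ln Γ(1+ν+n) + (n+m)·(1 − ln(n+m)) + ((1−3ν²)/24)·ln(1 + 1/(n+1)) − (ν/2)·ln(n+m) − ln(2π)/2 ] converges, and S = (ν/2)·ln Γ(m) − logG(1+ν) + ζ′(−1) + (ν/4)·ln(2π) − (3ν²−1)/24 + ζ′(−1, m+1) − m·ln m. -/
open Complex Filter

noncomputable section

/-- The Hurwitz zeta function `ζ(s,u)` for real `u > 0` (meromorphic continuation of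
`∑_{n≥0} (n+u)^{-s}`), expressed via Mathlib's Hurwitz zeta on the unit circle. -/
def hurwitzZetaR (u : ℝ) (s : ℂ) : ℂ :=
  HurwitzZeta.hurwitzZeta (↑(Int.fract u) : UnitAddCircle) s -
    ∑ n ∈ Finset.range ⌊u⌋₊, (((Int.fract u : ℝ) : ℂ) + (n : ℂ)) ^ (-s)

open Asymptotics
open scoped Topology

/-!
Both `log Γ(x + c)` and `∑ (n + c) log (n + c)` over `n < x` have Stirling expansions; the constant
term of the second one is `-ζ'(-1, c)`, up to an elementary part. To find it, apply the
Euler–Maclaurin formula to `t ↦ t^(-s)` on unit intervals: this continues `ζ(s, c)` to a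
neighbourhood of `s = -1` as a locally uniformly convergent series, which may be differentiated term
by term.

Write `m = (1 + ν) / 2`. Summation by parts turns `∑ log Γ(1 + ν + n)` over `n < N` into
`N log Γ(1 + ν + N) - ∑ (n + 1) log (n + 1 + ν)`, and the logarithm splits as
`log (n + 1) + log (1 + ν / (n + 1))`. The partial sums of the series thus consist of two
hyperfactorial sums, at `1` and at `m`, the sum defining `log G(1 + ν)`, and values of `log Γ`. The
divergent terms of their expansions cancel.
-/

namespace X2rc

/-! Euler–Maclaurin formula on a unit interval -/

-- The function `(B₃/6) g'' - (B₂/2) g' + B₁ g - G`, with the Bernoulli polynomials `Bᵢ` evaluated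
-- at `t - x`, has derivative `(B₃/6) g'''`; the mean value inequality does the rest.
lemma norm_eulerMaclaurin_step_le {E : Type*} [NormedAddCommGroup E] [NormedSpace ℝ E]
    {x C : ℝ} {G g g' g'' g''' : ℝ → E}
    (hG : ∀ t ∈ Set.Icc x (x + 1), HasDerivAt G (g t) t)
    (hg : ∀ t ∈ Set.Icc x (x + 1), HasDerivAt g (g' t) t)
    (hg' : ∀ t ∈ Set.Icc x (x + 1), HasDerivAt g' (g'' t) t)
    (hg'' : ∀ t ∈ Set.Icc x (x + 1), HasDerivAt g'' (g''' t) t)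
    (hC : ∀ t ∈ Set.Icc x (x + 1), ‖g''' t‖ ≤ C) :
    ‖(1 / 2 : ℝ) • (g x + g (x + 1)) - (G (x + 1) - G x) - (1 / 12 : ℝ) • (g' (x + 1) - g' x)‖
      ≤ C / 12 := by
  let b₁ : ℝ → ℝ := fun t => t - x - 1 / 2
  let b₂ : ℝ → ℝ := fun t => (t - x) ^ 2 / 2 - (t - x) / 2 + 1 / 12
  let b₃ : ℝ → ℝ := fun t => (t - x) * (t - x - 1 / 2) * (t - x - 1) / 6
  let F : ℝ → E := fun t => b₃ t • g'' t - b₂ t • g' t + b₁ t • g t - G t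
  have hid (t : ℝ) : HasDerivAt (fun t => t - x) 1 t := (hasDerivAt_id t).sub_const x
  have hb₁ (t : ℝ) : HasDerivAt b₁ 1 t := (hid t).sub_const _
  have hb₂ (t : ℝ) : HasDerivAt b₂ (b₁ t) t := by
    refine ((((hid t).pow 2).div_const 2).sub ((hid t).div_const 2) |>.add_const _).congr_deriv ?_
    simp [b₁]
  have hb₃ (t : ℝ) : HasDerivAt b₃ (b₂ t) t := by
    refine ((((hid t).mul ((hid t).sub_const _)).mul ((hid t).sub_const 1)).div_const 6).congr_deriv
      ?_
    simp only [b₂, Pi.mul_apply]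
    ring
  have hF : ∀ t ∈ Set.Icc x (x + 1), HasDerivAt F (b₃ t • g''' t) t := fun t ht => by
    refine (((((hb₃ t).smul (hg'' t ht)).sub ((hb₂ t).smul (hg' t ht))).add
      ((hb₁ t).smul (hg t ht))).sub (hG t ht)).congr_deriv ?_
    module
  have hb₃_le : ∀ t ∈ Set.Ico x (x + 1), |b₃ t| ≤ 1 / 12 := fun t ⟨hxt, htx⟩ => by
    have h₁ : |t - x| ≤ 1 := abs_le.2 ⟨by linarith, by linarith⟩
    have h₂ : |t - x - 1 / 2| ≤ 1 / 2 := abs_le.2 ⟨by linarith, by linarith⟩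
    have h₃ : |t - x - 1| ≤ 1 := abs_le.2 ⟨by linarith, by linarith⟩
    calc |b₃ t| = |t - x| * |t - x - 1 / 2| * |t - x - 1| / 6 := by
          simp only [b₃, abs_div, abs_mul, Nat.abs_ofNat]
      _ ≤ 1 * (1 / 2) * 1 / 6 := by gcongr
      _ = 1 / 12 := by norm_num
  have hmvt := norm_image_sub_le_of_norm_deriv_le_segment' (C := C / 12)
    (fun t ht => (hF t ht).hasDerivWithinAt) (fun t ht => by
      rw [norm_smul, Real.norm_eq_abs, div_eq_inv_mul, ← one_div]
      gcongr
      exacts [hb₃_le t ht, hC t ⟨ht.1, ht.2.le⟩]) (x + 1) ⟨by linarith, le_rfl⟩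
  convert hmvt using 1
  · congr 1
    simp only [F, b₁, b₂, b₃, add_sub_cancel_left, sub_self]
    module
  · ring

/-! Shifted logarithms -/

/-- The second Bernoulli polynomial `B₂`. -/
def bernoulliTwo (x : ℝ) : ℝ := x ^ 2 - x + 1 / 6

lemma log_one_add_sub_isBigO :
    (fun y : ℝ => Real.log (1 + y) - (y - y ^ 2 / 2)) =O[𝓝 0] fun y => y ^ 3 := by
  refine IsBigO.of_bound 2 ?_
  filter_upwards [Metric.ball_mem_nhds (0 : ℝ) (by norm_num : (0 : ℝ) < 1 / 2)] with y hy
  rw [mem_ball_zero_iff, Real.norm_eq_abs] at hy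
  have htaylor := Real.abs_log_sub_add_sum_range_le (x := -y) (by rw [abs_neg]; linarith) 2
  rw [abs_neg, sub_neg_eq_add] at htaylor
  calc ‖Real.log (1 + y) - (y - y ^ 2 / 2)‖ ≤ |y| ^ 3 / (1 - |y|) := by
        convert htaylor using 1
        simp only [Finset.sum_range_succ, Finset.sum_range_zero, Real.norm_eq_abs]
        congr 1
        push_cast
        ring
    _ ≤ |y| ^ 3 / 2⁻¹ := by gcongr; linarith
    _ = 2 * ‖y ^ 3‖ := by rw [norm_pow, Real.norm_eq_abs]; ring

lemma add_const_isEquivalent (c : ℝ) : (fun x : ℝ => x + c) ~[atTop] fun x => x :=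
  IsEquivalent.refl.add_isLittleO (isLittleO_const_id_atTop c)

lemma log_add_sub_isBigO (c : ℝ) :
    (fun x : ℝ => Real.log (x + c) - (Real.log x + c / x - c ^ 2 / (2 * x ^ 2)))
      =O[atTop] fun x => (x ^ 3)⁻¹ := by
  have h := (log_one_add_sub_isBigO.comp_tendsto (tendsto_id.const_div_atTop c)).trans <|
    show (fun x : ℝ => (c / x) ^ 3) =O[atTop] fun x => (x ^ 3)⁻¹ from
      .of_bound (|c| ^ 3) (.of_forall fun x => by simp [div_eq_mul_inv, mul_pow])
  refine h.congr' ?_ .rfl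
  filter_upwards [eventually_gt_atTop 0, eventually_gt_atTop (-c)] with x hx hxc
  have hsplit : x + c = x * (1 + c / x) := by field_simp
  have hne : 1 + c / x ≠ 0 := fun h0 => by simp only [h0, mul_zero] at hsplit; linarith
  rw [hsplit, Real.log_mul hx.ne' hne, Function.comp_apply, id]
  ring

/-! Stirling's formula -/

/-- Stirling's approximation to `log Γ(x + c)` with error `O(x⁻²)`, written around `log x`. -/
def stirlingApprox (c x : ℝ) : ℝ :=
  (x + c - 1 / 2) * Real.log x - x + Real.log (2 * Real.pi) / 2 + bernoulliTwo c / (2 * x)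

lemma pow_inv_isBigO_of_le {i j : ℕ} (hij : i ≤ j) :
    (fun x : ℝ => (x ^ j)⁻¹) =O[atTop] fun x => (x ^ i)⁻¹ := by
  refine IsBigO.of_bound 1 ?_
  filter_upwards [eventually_ge_atTop 1] with x hx
  have : 0 < x := by linarith
  rw [one_mul, Real.norm_of_nonneg (by positivity), Real.norm_of_nonneg (by positivity)]
  gcongr

lemma inv_mul_inv_add_isBigO (c : ℝ) :
    (fun x : ℝ => x⁻¹ * (x + c)⁻¹) =O[atTop] fun x => (x ^ 2)⁻¹ := by
  simpa only [sq, mul_inv, Pi.inv_apply] using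
    (isBigO_refl (fun x : ℝ => x⁻¹) atTop).mul (add_const_isEquivalent c).inv.isBigO

lemma stirlingApprox_zero_add_sub_isBigO (c : ℝ) :
    (fun x => stirlingApprox 0 (x + c) - stirlingApprox c x) =O[atTop] fun x => (x ^ 2)⁻¹ := by
  have hlin : (fun x : ℝ => x + c - 1 / 2) =O[atTop] fun x => x := by
    simpa only [add_sub_assoc] using (add_const_isEquivalent (c - 1 / 2)).isBigO
  have hlog := (hlin.mul (log_add_sub_isBigO c)).trans_eventuallyEq
    (g₂ := fun x => (x ^ 2)⁻¹) <| by
      filter_upwards [eventually_gt_atTop 0] with x hx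
      field_simp
  have hsq : (fun x : ℝ => (c - 1 / 2) * c ^ 2 / 2 * (x ^ 2)⁻¹) =O[atTop] fun x => (x ^ 2)⁻¹ :=
    isBigO_const_mul_self _ _ _
  have hinv := (inv_mul_inv_add_isBigO c).const_mul_left (c / 12)
  refine ((hlog.sub hinv).sub hsq).congr' ?_ .rfl
  filter_upwards [eventually_gt_atTop 0, eventually_gt_atTop (-c)] with x hx hxc
  have hxc' : x + c ≠ 0 := by linarith
  simp only [stirlingApprox, bernoulliTwo]
  field_simp
  ring

lemma logGamma_add_one {x : ℝ} (hx : 0 < x) :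
    Real.log (Real.Gamma (x + 1)) = Real.log (Real.Gamma x) + Real.log x := by
  rw [Real.Gamma_add_one hx.ne', Real.log_mul hx.ne' (Real.Gamma_pos_of_pos hx).ne', add_comm]

lemma abs_logGamma_sub_stirlingApprox_step_le {x : ℝ} (hx : 0 < x) :
    |(Real.log (Real.Gamma x) - stirlingApprox 0 x)
      - (Real.log (Real.Gamma (x + 1)) - stirlingApprox 0 (x + 1))| ≤ 1 / (6 * x ^ 3) := by
  have hpos : ∀ t ∈ Set.Icc x (x + 1), t ≠ 0 := fun t ht => (hx.trans_le ht.1).ne'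
  have hEM := norm_eulerMaclaurin_step_le (x := x) (C := 2 / x ^ 3)
    (G := fun t => t * Real.log t - t) (g := Real.log) (g' := fun t => t⁻¹)
    (g'' := fun t => -(t ^ 2)⁻¹) (g''' := fun t => 2 / t ^ 3)
    (fun t ht => (((hasDerivAt_id t).mul (Real.hasDerivAt_log (hpos t ht))).sub
      (hasDerivAt_id t)).congr_deriv (by have := hpos t ht; simp [this]))
    (fun t ht => Real.hasDerivAt_log (hpos t ht))
    (fun t ht => hasDerivAt_inv (hpos t ht))
    (fun t ht => ((hasDerivAt_pow 2 t).inv (pow_ne_zero 2 (hpos t ht))).neg.congr_deriv (by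
      have := hpos t ht; field_simp; ring))
    (fun t ht => by
      rw [Real.norm_of_nonneg (by have := hx.trans_le ht.1; positivity)]
      gcongr
      exact ht.1)
  calc _ = _ := by
        rw [← norm_neg, Real.norm_eq_abs]
        congr 1
        rw [logGamma_add_one hx]
        simp only [stirlingApprox, bernoulliTwo, smul_eq_mul]
        field_simp
        ring
    _ ≤ _ := hEM
    _ = 1 / (6 * x ^ 3) := by field_simp; norm_num

lemma tendsto_log_factorial_sub_stirlingApprox :
    Tendsto (fun n : ℕ => Real.log n.factorial - stirlingApprox 1 n) atTop (𝓝 0) := by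
  have hlog := ((Real.continuousAt_log (Real.sqrt_pos.2 Real.pi_pos).ne').tendsto.comp
    Stirling.tendsto_stirlingSeq_sqrt_pi).sub_const (Real.log (Real.sqrt Real.pi))
  have hinv : Tendsto (fun n : ℕ => 1 / 12 / (n : ℝ)) atTop (𝓝 0) :=
    tendsto_const_div_atTop_nhds_zero_nat _
  have hsub := hlog.sub hinv
  rw [sub_self, sub_zero] at hsub
  refine hsub.congr' ?_
  filter_upwards [eventually_ne_atTop 0] with n hn
  have hn' : (n : ℝ) ≠ 0 := by exact_mod_cast hn
  rw [Function.comp_apply, Stirling.log_stirlingSeq_formula, Real.log_sqrt Real.pi_pos.le,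
    Real.log_mul two_ne_zero hn', Real.log_div hn' (Real.exp_pos _).ne', Real.log_exp,
    stirlingApprox, Real.log_mul two_ne_zero Real.pi_pos.ne', bernoulliTwo]
  field_simp
  ring

lemma tendsto_logGamma_natCast_add_sub_stirlingApprox {x : ℝ} (hx : 0 < x) :
    Tendsto (fun n : ℕ => Real.log (Real.Gamma (n + (x + 1))) - stirlingApprox (x + 1) n)
      atTop (𝓝 0) := by
  have hinv : Tendsto (fun n : ℕ => (bernoulliTwo 1 - bernoulliTwo (x + 1)) / 2 / (n : ℝ))
      atTop (𝓝 0) := tendsto_const_div_atTop_nhds_zero_nat _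
  have hsum := (((Real.BohrMollerup.tendsto_log_gamma hx).const_sub
    (Real.log (Real.Gamma x))).add tendsto_log_factorial_sub_stirlingApprox).add hinv
  rw [sub_self, add_zero, add_zero] at hsum
  refine hsum.congr fun n => ?_
  have hGamma := Real.BohrMollerup.f_add_nat_eq (f := Real.log ∘ Real.Gamma)
    logGamma_add_one hx (n + 1)
  simp only [Function.comp_apply, Nat.cast_add_one] at hGamma
  rw [add_left_comm, hGamma]
  simp only [Real.BohrMollerup.logGammaSeq, stirlingApprox]
  ring

lemma tendsto_logGamma_sub_stirlingApprox_add_nat {x : ℝ} (hx : 0 < x) :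
    Tendsto (fun n : ℕ => Real.log (Real.Gamma (x + n)) - stirlingApprox 0 (x + n))
      atTop (𝓝 0) := by
  rw [← tendsto_add_atTop_iff_nat 1]
  have hshift := ((stirlingApprox_zero_add_sub_isBigO (x + 1)).trans_tendsto
    (tendsto_pow_atTop two_ne_zero).inv_tendsto_atTop).comp tendsto_natCast_atTop_atTop
  have hsub := (tendsto_logGamma_natCast_add_sub_stirlingApprox hx).sub hshift
  rw [sub_self] at hsub
  refine hsub.congr fun n => ?_
  rw [Function.comp_apply, Nat.cast_add_one, add_left_comm x]
  ring

lemma abs_logGamma_sub_stirlingApprox_le {x : ℝ} (hx : 1 ≤ x) :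
    |Real.log (Real.Gamma x) - stirlingApprox 0 x| ≤ (x ^ 2)⁻¹ := by
  let f : ℕ → ℝ := fun n => Real.log (Real.Gamma (x + n)) - stirlingApprox 0 (x + n)
  have hstep (n : ℕ) : |f n - f (n + 1)| ≤ ((x + n) ^ 2)⁻¹ - ((x + (n + 1 : ℕ)) ^ 2)⁻¹ := by
    have hy : 1 ≤ x + n := by linarith [n.cast_nonneg (α := ℝ)]
    simp only [f, Nat.cast_add_one, ← add_assoc]
    refine (abs_logGamma_sub_stirlingApprox_step_le (by linarith)).trans ?_
    generalize x + n = y at hy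
    have : 0 < y := by linarith
    rw [inv_sub_inv (by positivity) (by positivity),
      div_le_div_iff₀ (by positivity) (by positivity)]
    nlinarith [pow_le_pow_right₀ hy (show 1 ≤ 2 by norm_num)]
  have hpartial (n : ℕ) : |f 0 - f n| ≤ (x ^ 2)⁻¹ := by
    rw [← Finset.sum_range_sub']
    refine (Finset.abs_sum_le_sum_abs _ _).trans <| (Finset.sum_le_sum fun n _ => hstep n).trans ?_
    rw [Finset.sum_range_sub' (fun n : ℕ => ((x + n) ^ 2)⁻¹)]
    simp [inv_nonneg.2, sq_nonneg]
  have hlim := ((tendsto_logGamma_sub_stirlingApprox_add_nat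
    (by linarith : 0 < x)).const_sub (f 0)).abs
  simpa [f] using le_of_tendsto' hlim hpartial

lemma logGamma_add_sub_stirlingApprox_isBigO (c : ℝ) :
    (fun x => Real.log (Real.Gamma (x + c)) - stirlingApprox c x) =O[atTop] fun x => (x ^ 2)⁻¹ := by
  have hzero : (fun x => Real.log (Real.Gamma x) - stirlingApprox 0 x)
      =O[atTop] fun x => (x ^ 2)⁻¹ := .of_bound 1 <| by
    filter_upwards [eventually_ge_atTop 1] with x hx
    rw [Real.norm_eq_abs, one_mul, Real.norm_of_nonneg (by positivity)]
    exact abs_logGamma_sub_stirlingApprox_le hx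
  have hshift : (fun x => Real.log (Real.Gamma (x + c)) - stirlingApprox 0 (x + c))
      =O[atTop] fun x => (x ^ 2)⁻¹ :=
    (hzero.comp_tendsto (tendsto_atTop_add_const_right _ c tendsto_id)).trans
      ((add_const_isEquivalent c).pow 2).inv.isBigO
  simpa only [sub_add_sub_cancel] using hshift.add (stirlingApprox_zero_add_sub_isBigO c)

/-! Hurwitz zeta function -/

lemma hurwitzZetaR_zero : hurwitzZetaR 0 = riemannZeta := by
  ext s
  simp [hurwitzZetaR, ← HurwitzZeta.hurwitzZeta_zero]

lemma hurwitzZetaR_add_one {u : ℝ} (hu : 0 ≤ u) (s : ℂ) :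
    hurwitzZetaR (u + 1) s = hurwitzZetaR u s - (u : ℂ) ^ (-s) := by
  have hfloor : Int.fract u + (⌊u⌋₊ : ℝ) = u := by
    rw [natCast_floor_eq_intCast_floor hu, Int.fract_add_floor]
  rw [hurwitzZetaR, hurwitzZetaR, Int.fract_add_one, Nat.floor_add_one hu, Finset.sum_range_succ,
    sub_add_eq_sub_sub]
  congr 2
  exact_mod_cast congrArg ((↑) : ℝ → ℂ) hfloor

lemma hasSum_hurwitzZetaR {u : ℝ} (hu : 0 ≤ u) {s : ℂ} (hs : 1 < s.re) :
    HasSum (fun n : ℕ => ((u + n : ℝ) : ℂ) ^ (-s)) (hurwitzZetaR u s) := by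
  have hsum := (hasSum_nat_add_iff' ⌊u⌋₊).2 <| HurwitzZeta.hasSum_hurwitzZeta_of_one_lt_re
    ⟨Int.fract_nonneg u, (Int.fract_lt_one u).le⟩ hs
  have hfloor : (⌊u⌋₊ : ℝ) + Int.fract u = u := by
    rw [natCast_floor_eq_intCast_floor hu, Int.floor_add_fract]
  have hterm (n : ℕ) : ((u + n : ℝ) : ℂ) ^ (-s)
      = 1 / (((n + ⌊u⌋₊ : ℕ) : ℂ) + (Int.fract u : ℝ)) ^ s := by
    have hu' : u + n = (n + ⌊u⌋₊ : ℕ) + Int.fract u := by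
      push_cast
      linarith
    rw [hu', cpow_neg, one_div, ofReal_add, ofReal_natCast]
  simp only [hterm]
  simpa only [hurwitzZetaR, cpow_neg, one_div, add_comm ((Int.fract u : ℝ) : ℂ)] using hsum

lemma differentiableAt_hurwitzZetaR (u : ℝ) {s : ℂ} (hs₀ : s ≠ 0) (hs₁ : s ≠ 1) :
    DifferentiableAt ℂ (hurwitzZetaR u) s :=
  (HurwitzZeta.differentiableAt_hurwitzZeta _ hs₁).sub <| .fun_sum fun _ _ =>
    differentiableAt_id.neg.const_cpow (.inr (neg_ne_zero.2 hs₀))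

lemma hasDerivAt_ofReal_cpow_neg {x : ℝ} (hx : 0 ≤ x) :
    HasDerivAt (fun s : ℂ => (x : ℂ) ^ (-s)) ((-(x * Real.log x) : ℝ) : ℂ) (-1) := by
  refine ((hasDerivAt_neg (-1 : ℂ)).const_cpow (c := (x : ℂ)) (.inr (by simp))).congr_deriv ?_
  rw [← ofReal_log hx]
  simp

lemma deriv_hurwitzZetaR_add_one {u : ℝ} (hu : 0 ≤ u) :
    deriv (hurwitzZetaR (u + 1)) (-1)
      = deriv (hurwitzZetaR u) (-1) + ((u * Real.log u : ℝ) : ℂ) := by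
  have hd := (differentiableAt_hurwitzZetaR u (s := -1) (by norm_num) (by norm_num)).hasDerivAt.sub
    (hasDerivAt_ofReal_cpow_neg hu)
  rw [show hurwitzZetaR (u + 1) = hurwitzZetaR u - fun s : ℂ => (u : ℂ) ^ (-s) from
    funext (hurwitzZetaR_add_one hu), hd.deriv, ofReal_neg, sub_neg_eq_add]

/-- The Euler–Maclaurin approximation `x^(1-s)/(s-1) + x^(-s)/2 + s x^(-s-1)/12` to the Hurwitz zeta
function `ζ(s, x)`. -/
def hurwitzZetaApprox (x : ℝ) (s : ℂ) : ℂ :=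
  (x : ℂ) ^ (1 - s) / (s - 1) + (x : ℂ) ^ (-s) / 2 + s * (x : ℂ) ^ (-s - 1) / 12

/-- The amount by which `hurwitzZetaApprox` fails the equation `ζ(s, x) - ζ(s, x + 1) = x^(-s)`. -/
def hurwitzZetaApproxDefect (x : ℝ) (s : ℂ) : ℂ :=
  (x : ℂ) ^ (-s) - (hurwitzZetaApprox x s - hurwitzZetaApprox (x + 1) s)

lemma hasDerivAt_ofReal_cpow_of_pos {t : ℝ} (ht : 0 < t) (c : ℂ) :
    HasDerivAt (fun t : ℝ => (t : ℂ) ^ c) (c * (t : ℂ) ^ (c - 1)) t := by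
  simpa using (hasDerivAt_id (t : ℂ)).cpow_const (c := c) (.inl (by simpa using ht)) |>.comp_ofReal

lemma norm_hurwitzZetaApproxDefect_le {x : ℝ} (hx : 0 < x) {s : ℂ} (hs₁ : s ≠ 1) (hs : -3 ≤ s.re) :
    ‖hurwitzZetaApproxDefect x s‖ ≤ ‖s * (s + 1) * (s + 2)‖ / 12 * x ^ (-s.re - 3) := by
  have hpos : ∀ t ∈ Set.Icc x (x + 1), 0 < t := fun t ht => hx.trans_le ht.1
  have hs₁' : 1 - s ≠ 0 := sub_ne_zero.2 hs₁.symm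
  have hs₁'' : s - 1 ≠ 0 := sub_ne_zero.2 hs₁
  have hEM := norm_eulerMaclaurin_step_le (x := x)
    (C := ‖s * (s + 1) * (s + 2)‖ * x ^ (-s.re - 3))
    (G := fun t => (t : ℂ) ^ (1 - s) / (1 - s)) (g := fun t => (t : ℂ) ^ (-s))
    (g' := fun t => -s * (t : ℂ) ^ (-s - 1))
    (g'' := fun t => -s * ((-s - 1) * (t : ℂ) ^ (-s - 1 - 1)))
    (g''' := fun t => -s * ((-s - 1) * ((-s - 1 - 1) * (t : ℂ) ^ (-s - 1 - 1 - 1))))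
    (fun t ht => ((hasDerivAt_ofReal_cpow_of_pos (hpos t ht) _).div_const _).congr_deriv (by
      rw [mul_div_cancel_left₀ _ hs₁', sub_sub_cancel_left]))
    (fun t ht => hasDerivAt_ofReal_cpow_of_pos (hpos t ht) _)
    (fun t ht => (hasDerivAt_ofReal_cpow_of_pos (hpos t ht) _).const_mul _)
    (fun t ht => ((hasDerivAt_ofReal_cpow_of_pos (hpos t ht) _).const_mul _).const_mul _)
    (fun t ht => by
      have hre : (-s - 1 - 1 - 1).re = -s.re - 3 := by simp; ring
      calc _ = ‖s * (s + 1) * (s + 2)‖ * t ^ (-s.re - 3) := by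
            rw [← hre, ← norm_cpow_eq_rpow_re_of_pos (hpos t ht), ← norm_mul, ← norm_neg]
            ring_nf
        _ ≤ _ := by
            gcongr ?_ * ?_
            exact Real.rpow_le_rpow_of_nonpos hx ht.1 (by linarith))
  calc _ = _ := by
        congr 1
        simp only [hurwitzZetaApproxDefect, hurwitzZetaApprox, real_smul]
        push_cast
        field_simp
        ring
    _ ≤ _ := hEM
    _ = _ := by ring

/-- A domain of analytic continuation for the Hurwitz zeta function: a convex set that contains `-1`
and meets the half-plane of absolute convergence `1 < re s`, but avoids the pole `s = 1` and the
point `s = 0`, where Lean's `0 ^ (-s)` is discontinuous. -/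
def continuationDomain : Set ℂ :=
  {s | -(3 / 2) < s.re} ∩ {s | s.re - s.im < 0} ∩ Metric.ball 0 4

lemma isOpen_continuationDomain : IsOpen continuationDomain :=
  ((isOpen_lt continuous_const continuous_re).inter
    (isOpen_lt (continuous_re.sub continuous_im) continuous_const)).inter Metric.isOpen_ball

lemma convex_continuationDomain : Convex ℝ continuationDomain :=
  ((convex_halfSpace_re_gt _).inter
    (convex_halfSpace_lt (reLm - imLm).isLinear 0)).inter (convex_ball _ _)

lemma neg_one_mem_continuationDomain : (-1 : ℂ) ∈ continuationDomain := by
  refine ⟨⟨?_, ?_⟩, ?_⟩ <;> norm_num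

lemma exists_mem_continuationDomain_one_lt_re : ∃ s ∈ continuationDomain, 1 < s.re := by
  refine ⟨⟨2, 3⟩, ⟨⟨?_, ?_⟩, ?_⟩, ?_⟩
  all_goals norm_num
  rw [← sq_lt_sq₀ (norm_nonneg _) (by norm_num), ← normSq_eq_norm_sq, normSq_mk]
  norm_num

lemma ne_zero_of_mem_continuationDomain {s : ℂ} (hs : s ∈ continuationDomain) : s ≠ 0 := by
  rintro rfl
  simpa using hs.1.2

lemma ne_one_of_mem_continuationDomain {s : ℂ} (hs : s ∈ continuationDomain) : s ≠ 1 := by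
  rintro rfl
  have h := hs.1.2
  norm_num at h

lemma norm_hurwitzZetaApproxDefect_le_of_mem {x y : ℝ} (hy : 1 ≤ y) (hyx : y ≤ x) {s : ℂ}
    (hs : s ∈ continuationDomain) :
    ‖hurwitzZetaApproxDefect x s‖ ≤ 10 * y ^ (-(3 / 2) : ℝ) := by
  have hx : 0 < x := by linarith
  have hre : -(3 / 2) < s.re := hs.1.1
  have h₀ : ‖s‖ ≤ 4 := (mem_ball_zero_iff.1 hs.2).le
  have h₁ : ‖s + 1‖ ≤ 5 := (norm_add_le _ _).trans (by norm_num; linarith)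
  have h₂ : ‖s + 2‖ ≤ 6 := (norm_add_le _ _).trans (by norm_num; linarith)
  have hpow : x ^ (-s.re - 3) ≤ y ^ (-(3 / 2) : ℝ) :=
    (Real.rpow_le_rpow_of_exponent_le (hy.trans hyx) (by linarith)).trans
      (Real.rpow_le_rpow_of_nonpos (by linarith) hyx (by norm_num))
  calc ‖hurwitzZetaApproxDefect x s‖ ≤ ‖s * (s + 1) * (s + 2)‖ / 12 * x ^ (-s.re - 3) :=
        norm_hurwitzZetaApproxDefect_le hx (ne_one_of_mem_continuationDomain hs)
          (by linarith)
    _ ≤ 4 * 5 * 6 / 12 * y ^ (-(3 / 2) : ℝ) := by rw [norm_mul, norm_mul]; gcongr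
    _ = 10 * y ^ (-(3 / 2) : ℝ) := by norm_num

lemma summable_const_mul_one_add_rpow :
    Summable fun n : ℕ => 10 * ((1 + n : ℝ) ^ (-(3 / 2) : ℝ)) := by
  have h := (summable_nat_add_iff 1).2
    (Real.summable_nat_rpow.2 (by norm_num : (-(3 / 2) : ℝ) < -1))
  simpa [add_comm] using h.mul_left 10

lemma differentiableAt_hurwitzZetaApprox {x : ℝ} (hx : 0 < x) {s : ℂ} (hs : s ≠ 1) :
    DifferentiableAt ℂ (hurwitzZetaApprox x) s := by
  have hx' : (x : ℂ) ≠ 0 := by exact_mod_cast hx.ne'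
  have hs' : s - 1 ≠ 0 := sub_ne_zero.2 hs
  unfold hurwitzZetaApprox
  fun_prop (disch := simp [hx'])

lemma differentiableAt_hurwitzZetaApproxDefect {x : ℝ} (hx : 0 < x) {s : ℂ} (hs : s ≠ 1) :
    DifferentiableAt ℂ (hurwitzZetaApproxDefect x) s :=
  (differentiableAt_id.neg.const_cpow (.inl (by exact_mod_cast hx.ne'))).fun_sub <|
    (differentiableAt_hurwitzZetaApprox hx hs).fun_sub
      (differentiableAt_hurwitzZetaApprox (by linarith) hs)

lemma tendsto_hurwitzZetaApprox_add_nat (u : ℝ) {s : ℂ} (hs : 1 < s.re) :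
    Tendsto (fun n : ℕ => hurwitzZetaApprox (u + n) s) atTop (𝓝 0) := by
  have hcpow {c : ℂ} (hc : c.re < 0) : Tendsto (fun x : ℝ => (x : ℂ) ^ c) atTop (𝓝 0) := by
    rw [tendsto_zero_iff_norm_tendsto_zero]
    refine (tendsto_rpow_neg_atTop (neg_pos.2 hc)).congr' ?_
    filter_upwards [eventually_gt_atTop 0] with x hx
    rw [norm_cpow_eq_rpow_re_of_pos hx, neg_neg]
  have hlim : Tendsto (fun x => hurwitzZetaApprox x s) atTop (𝓝 0) := by
    simpa [hurwitzZetaApprox] using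
      (((hcpow (c := 1 - s) (by simpa using hs)).div_const (s - 1)).add
        ((hcpow (c := -s) (by simp; linarith)).div_const 2)).add
        (((hcpow (c := -s - 1) (by simp; linarith)).const_mul s).div_const 12)
  exact hlim.comp (tendsto_atTop_add_const_left _ u tendsto_natCast_atTop_atTop)

lemma differentiableOn_hurwitzZetaApproxDefect_add_nat {u : ℝ} (hu : 0 < u) (n : ℕ) :
    DifferentiableOn ℂ (hurwitzZetaApproxDefect (u + n)) continuationDomain := fun _ hs =>
  (differentiableAt_hurwitzZetaApproxDefect (by positivity)
    (ne_one_of_mem_continuationDomain hs)).differentiableWithinAt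

lemma hasSum_hurwitzZetaApproxDefect {u : ℝ} (hu : 0 < u) {s : ℂ} (hs : 1 < s.re)
    (hsum : Summable fun n : ℕ => hurwitzZetaApproxDefect (u + n) s) :
    HasSum (fun n : ℕ => hurwitzZetaApproxDefect (u + n) s)
      (hurwitzZetaR u s - hurwitzZetaApprox u s) := by
  have hpartial (N : ℕ) : ∑ n ∈ Finset.range N, hurwitzZetaApproxDefect (u + n) s
      = ∑ n ∈ Finset.range N, ((u + n : ℝ) : ℂ) ^ (-s)
        - (hurwitzZetaApprox u s - hurwitzZetaApprox (u + N) s) := by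
    have htele := Finset.sum_range_sub' (fun n : ℕ => hurwitzZetaApprox (u + n) s) N
    simp only [Nat.cast_zero, add_zero, Nat.cast_add_one, ← add_assoc] at htele
    simp only [hurwitzZetaApproxDefect, Finset.sum_sub_distrib, ← htele]
  have hlim := (hasSum_hurwitzZetaR hu.le hs).tendsto_sum_nat.sub
    ((tendsto_hurwitzZetaApprox_add_nat u hs).const_sub (hurwitzZetaApprox u s))
  rw [sub_zero] at hlim
  exact (hsum.hasSum_iff_tendsto_nat).2 (hlim.congr fun N => (hpartial N).symm)

section Continuation

variable {u : ℝ} (hu : 1 ≤ u)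
include hu

lemma norm_hurwitzZetaApproxDefect_add_nat_le (n : ℕ) {s : ℂ} (hs : s ∈ continuationDomain) :
    ‖hurwitzZetaApproxDefect (u + n) s‖ ≤ 10 * ((1 + n : ℝ) ^ (-(3 / 2) : ℝ)) :=
  norm_hurwitzZetaApproxDefect_le_of_mem (by simp) (by gcongr) hs

lemma eqOn_hurwitzZetaR_continuationDomain :
    Set.EqOn (hurwitzZetaR u)
      (fun s => hurwitzZetaApprox u s + ∑' n : ℕ, hurwitzZetaApproxDefect (u + n) s)
      continuationDomain := by
  obtain ⟨s₀, hs₀, hs₀re⟩ := exists_mem_continuationDomain_one_lt_re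
  refine AnalyticOnNhd.eqOn_of_preconnected_of_eventuallyEq (𝕜 := ℂ) ?_ ?_
    convex_continuationDomain.isPreconnected hs₀ ?_
  · refine DifferentiableOn.analyticOnNhd (fun s hs => ?_) isOpen_continuationDomain
    exact (differentiableAt_hurwitzZetaR u (ne_zero_of_mem_continuationDomain hs)
      (ne_one_of_mem_continuationDomain hs)).differentiableWithinAt
  · refine DifferentiableOn.analyticOnNhd (.fun_add (fun s hs => ?_) ?_) isOpen_continuationDomain
    · exact (differentiableAt_hurwitzZetaApprox (by linarith)
        (ne_one_of_mem_continuationDomain hs)).differentiableWithinAt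
    · exact differentiableOn_tsum_of_summable_norm summable_const_mul_one_add_rpow
        (differentiableOn_hurwitzZetaApproxDefect_add_nat (by linarith)) isOpen_continuationDomain
        fun n s hs => norm_hurwitzZetaApproxDefect_add_nat_le hu n hs
  · filter_upwards [(isOpen_lt continuous_const continuous_re).mem_nhds hs₀re,
      isOpen_continuationDomain.mem_nhds hs₀] with s hre hs
    have hsum : Summable fun n : ℕ => hurwitzZetaApproxDefect (u + n) s :=
      .of_norm_bounded summable_const_mul_one_add_rpow
        fun n => norm_hurwitzZetaApproxDefect_add_nat_le hu n hs
    rw [(hasSum_hurwitzZetaApproxDefect (by linarith) hre hsum).tsum_eq, add_sub_cancel]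

lemma hasSum_deriv_hurwitzZetaApproxDefect :
    HasSum (fun n : ℕ => deriv (hurwitzZetaApproxDefect (u + n)) (-1))
      (deriv (hurwitzZetaR u) (-1) - deriv (hurwitzZetaApprox u) (-1)) := by
  have hmem := isOpen_continuationDomain.mem_nhds neg_one_mem_continuationDomain
  have hdiff := differentiableOn_tsum_of_summable_norm summable_const_mul_one_add_rpow
    (differentiableOn_hurwitzZetaApproxDefect_add_nat (by linarith)) isOpen_continuationDomain
    fun n s hs => norm_hurwitzZetaApproxDefect_add_nat_le hu n hs
  rw [(Filter.eventuallyEq_of_mem hmem (eqOn_hurwitzZetaR_continuationDomain hu)).deriv_eq,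
    deriv_fun_add (differentiableAt_hurwitzZetaApprox (by linarith) (by norm_num))
      (hdiff.differentiableAt hmem), add_sub_cancel_left]
  exact hasSum_deriv_of_summable_norm summable_const_mul_one_add_rpow
    (differentiableOn_hurwitzZetaApproxDefect_add_nat (by linarith)) isOpen_continuationDomain
    (fun n s hs => norm_hurwitzZetaApproxDefect_add_nat_le hu n hs) neg_one_mem_continuationDomain

end Continuation

/-- Approximation to `∑ (n + c) log (n + c) + ζ'(-1, c)`, the sum being over `0 ≤ n < x`, with error
`o(1)`, written around `log x`. -/
def logHyperfactorialApprox (c x : ℝ) : ℝ :=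
  (x ^ 2 / 2 + (c - 1 / 2) * x + bernoulliTwo c / 2) * Real.log x - x ^ 2 / 4 + bernoulliTwo c / 2

lemma hasDerivAt_hurwitzZetaApprox_neg_one {x : ℝ} (hx : 0 < x) :
    HasDerivAt (hurwitzZetaApprox x) ((logHyperfactorialApprox 0 x : ℝ) : ℂ) (-1) := by
  have hx' : (x : ℂ) ≠ 0 := by exact_mod_cast hx.ne'
  have h₁ := (((hasDerivAt_id (-1 : ℂ)).const_sub 1).const_cpow (c := (x : ℂ)) (.inl hx')).div
    ((hasDerivAt_id (-1 : ℂ)).sub_const 1) (by norm_num)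
  have h₂ := (hasDerivAt_ofReal_cpow_neg hx.le).div_const 2
  have h₃ := ((hasDerivAt_id (-1 : ℂ)).mul
    (((hasDerivAt_neg (-1 : ℂ)).sub_const 1).const_cpow (c := (x : ℂ)) (.inl hx'))).div_const 12
  refine ((h₁.add h₂).add h₃).congr_deriv ?_
  rw [← ofReal_log hx.le, logHyperfactorialApprox, bernoulliTwo]
  simp only [id, show (1 : ℂ) - -1 = (2 : ℕ) by norm_num, show (- -1 : ℂ) - 1 = 0 by norm_num,
    cpow_natCast, cpow_zero]
  push_cast
  ring

lemma deriv_hurwitzZetaApproxDefect_neg_one {x : ℝ} (hx : 0 < x) :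
    deriv (hurwitzZetaApproxDefect x) (-1) = ((-(x * Real.log x)
      - (logHyperfactorialApprox 0 x - logHyperfactorialApprox 0 (x + 1)) : ℝ) : ℂ) := by
  refine HasDerivAt.deriv (((hasDerivAt_ofReal_cpow_neg hx.le).sub
    ((hasDerivAt_hurwitzZetaApprox_neg_one hx).sub
      (hasDerivAt_hurwitzZetaApprox_neg_one (by linarith : 0 < x + 1)))).congr_deriv ?_)
  push_cast
  rfl

lemma tendsto_logHyperfactorialApprox_zero_sub_sum {u : ℝ} (hu : 1 ≤ u) :
    Tendsto (fun N : ℕ => ((logHyperfactorialApprox 0 (u + N)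
      - ∑ n ∈ Finset.range N, (u + n) * Real.log (u + n) : ℝ) : ℂ))
      atTop (𝓝 (deriv (hurwitzZetaR u) (-1))) := by
  have hu₀ : 0 < u := by linarith
  have hlim := (hasSum_deriv_hurwitzZetaApproxDefect hu).tendsto_sum_nat.add_const
    (deriv (hurwitzZetaApprox u) (-1))
  rw [sub_add_cancel, (hasDerivAt_hurwitzZetaApprox_neg_one hu₀).deriv] at hlim
  refine hlim.congr fun N => ?_
  have htele := Finset.sum_range_sub' (fun n : ℕ => logHyperfactorialApprox 0 (u + n)) N
  simp only [Nat.cast_zero, add_zero, Nat.cast_add_one, ← add_assoc] at htele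
  have hderiv (n : ℕ) := deriv_hurwitzZetaApproxDefect_neg_one (by positivity : 0 < u + n)
  simp only [hderiv]
  rw [← ofReal_sum, ← ofReal_add, Finset.sum_sub_distrib, htele, Finset.sum_neg_distrib]
  ring_nf

lemma bernoulliTwo_add_isBigO (c : ℝ) :
    (fun x => bernoulliTwo (x + c)) =O[atTop] fun x => x ^ 2 := by
  refine (((add_const_isEquivalent c).isBigO.mul (add_const_isEquivalent (c - 1)).isBigO).add
    ((isLittleO_const_id_atTop (1 / 6 : ℝ)).isBigO.mul
      (isLittleO_const_id_atTop (1 : ℝ)).isBigO)).congr (fun x => ?_) fun x => (sq x).symm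
  rw [bernoulliTwo]
  ring

lemma logHyperfactorialApprox_zero_add_sub_isBigO (c : ℝ) :
    (fun x => logHyperfactorialApprox 0 (x + c) - logHyperfactorialApprox c x)
      =O[atTop] fun x => x⁻¹ := by
  have hsq := (bernoulliTwo_add_isBigO c).const_mul_left (1 / 2)
  have hlog := (hsq.mul (log_add_sub_isBigO c)).trans_eventuallyEq (g₂ := fun x => x⁻¹) <| by
    filter_upwards [eventually_gt_atTop 0] with x hx
    field_simp
  have hinv : (fun x : ℝ => (bernoulliTwo c / 2 * c - (c - 1 / 2) * c ^ 2 / 2) * x⁻¹)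
      =O[atTop] fun x => x⁻¹ := isBigO_const_mul_self _ _ _
  have hinv_sq : (fun x : ℝ => bernoulliTwo c * c ^ 2 / 4 * (x ^ 2)⁻¹) =O[atTop] fun x => x⁻¹ := by
    simpa using (pow_inv_isBigO_of_le one_le_two).const_mul_left (bernoulliTwo c * c ^ 2 / 4)
  refine ((hlog.add hinv).sub hinv_sq).congr' ?_ .rfl
  filter_upwards [eventually_gt_atTop 0] with x hx
  simp only [logHyperfactorialApprox, bernoulliTwo]
  field_simp
  ring

lemma tendsto_logHyperfactorialApprox_sub_sum {u : ℝ} (hu : 0 < u) :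
    Tendsto (fun N : ℕ => ((logHyperfactorialApprox u N
      - ∑ n ∈ Finset.range N, (u + n) * Real.log (u + n) : ℝ) : ℂ))
      atTop (𝓝 (deriv (hurwitzZetaR u) (-1))) := by
  have hzero : Tendsto (fun N : ℕ => ((logHyperfactorialApprox 0 (N + u)
      - ∑ n ∈ Finset.range N, (u + n) * Real.log (u + n) : ℝ) : ℂ))
      atTop (𝓝 (deriv (hurwitzZetaR u) (-1))) := by
    rw [← tendsto_add_atTop_iff_nat 1]
    have hlim := (tendsto_logHyperfactorialApprox_zero_sub_sum
      (by linarith : 1 ≤ u + 1)).sub_const ((u * Real.log u : ℝ) : ℂ)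
    rw [deriv_hurwitzZetaR_add_one hu.le, add_sub_cancel_right] at hlim
    refine hlim.congr fun N => ?_
    rw [← ofReal_sub, Finset.sum_range_succ']
    push_cast
    ring_nf
  have hshift := ((logHyperfactorialApprox_zero_add_sub_isBigO u).trans_tendsto
    tendsto_inv_atTop_zero).comp tendsto_natCast_atTop_atTop
  have hsub := hzero.sub hshift.ofReal
  rw [ofReal_zero, sub_zero] at hsub
  refine hsub.congr fun N => ?_
  rw [Function.comp_apply, ← ofReal_sub]
  ring_nf

lemma deriv_hurwitzZetaR_one : deriv (hurwitzZetaR 1) (-1) = deriv riemannZeta (-1) := by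
  simpa [hurwitzZetaR_zero] using deriv_hurwitzZetaR_add_one le_rfl

/-! Barnes `G`-function -/

/-- The general term of the series defining `logBarnesG1p`. -/
def barnesTerm (x : ℝ) (k : ℕ) : ℝ :=
  ((k : ℝ) + 1) * Real.log (1 + x / ((k : ℝ) + 1)) - x + x ^ 2 / (2 * ((k : ℝ) + 1))

lemma summable_barnesTerm (x : ℝ) : Summable (barnesTerm x) := by
  have hlog : (fun y : ℝ => y * Real.log (1 + x / y) - x + x ^ 2 / (2 * y))
      =O[atTop] fun y => (y ^ 2)⁻¹ := by
    have h := (isBigO_refl (fun y : ℝ => y) atTop).mul (log_add_sub_isBigO x)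
    refine h.congr' ?_ ?_
    · filter_upwards [eventually_gt_atTop 0, eventually_gt_atTop (-x)] with y hy hxy
      have hsplit : 1 + x / y = (y + x) / y := by field_simp
      rw [hsplit, Real.log_div (by linarith) hy.ne']
      field_simp
      ring
    · filter_upwards [eventually_gt_atTop 0] with y hy
      field_simp
  have h := hlog.comp_tendsto tendsto_natCast_atTop_atTop
  refine (summable_nat_add_iff 1 (f := fun k : ℕ =>
    (k : ℝ) * Real.log (1 + x / k) - x + x ^ 2 / (2 * k))).2
    (summable_of_isBigO_nat (Real.summable_nat_pow_inv.2 one_lt_two) h) |>.congr fun k => ?_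
  simp [barnesTerm]

lemma tendsto_sum_mul_log_one_add_div (x : ℝ) :
    Tendsto (fun N : ℕ => ∑ k ∈ Finset.range N, ((k : ℝ) + 1) * Real.log (1 + x / ((k : ℝ) + 1))
      - x * N + x ^ 2 / 2 * Real.log N + x / 2 * Real.log (2 * Real.pi) - (x + x ^ 2) / 2)
      atTop (𝓝 (logBarnesG1p x)) := by
  have h := (((summable_barnesTerm x).hasSum.tendsto_sum_nat.sub
    (Real.tendsto_harmonic_sub_log.const_mul (x ^ 2 / 2))).add_const
      (x / 2 * Real.log (2 * Real.pi))).sub_const ((x + x ^ 2) / 2)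
  convert h using 1
  · ext N
    have hharmonic : ((harmonic N : ℚ) : ℝ) = ∑ k ∈ Finset.range N, ((k : ℝ) + 1)⁻¹ := by
      simp [harmonic]
    simp only [barnesTerm, hharmonic, Finset.sum_add_distrib, Finset.sum_sub_distrib,
      Finset.sum_const, Finset.card_range, nsmul_eq_mul, div_eq_mul_inv, mul_inv]
    simp only [← Finset.mul_sum]
    ring
  · simp only [logBarnesG1p, barnesTerm]
    ring_nf

/-! Evaluation of the series -/

lemma log_one_add_one_div_sub_isBigO (c : ℝ) :
    (fun x : ℝ => Real.log (1 + 1 / (x + 1)) - (x + c)⁻¹) =O[atTop] fun x => (x ^ 2)⁻¹ := by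
  have hlog (c : ℝ) := (log_add_sub_isBigO c).trans (pow_inv_isBigO_of_le (Nat.le_succ 2))
  refine ((((hlog 2).sub (hlog 1)).sub (isBigO_const_mul_self (3 / 2) _ _)).add
    ((inv_mul_inv_add_isBigO c).const_mul_left c)).congr' ?_ .rfl
  filter_upwards [eventually_gt_atTop 0, eventually_gt_atTop (-c)] with x hx hxc
  have hxc' : x + c ≠ 0 := by linarith
  have hsplit : 1 + 1 / (x + 1) = (x + 2) / (x + 1) := by field_simp; ring
  rw [hsplit, Real.log_div (by positivity) (by positivity)]
  field_simp
  ring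

lemma bernoulliTwo_one_add_div_two (x : ℝ) :
    bernoulliTwo ((1 + x) / 2) = -2 * ((1 - 3 * x ^ 2) / 24) := by
  rw [bernoulliTwo]
  ring

/-- The general term of the series `X_{2,r}^{(c)}`. -/
def summand (ν : ℝ) (n : ℕ) : ℝ :=
  Real.log (Real.Gamma (1 + ν + n)) +
    ((n : ℝ) + (1 + ν) / 2) * (1 - Real.log ((n : ℝ) + (1 + ν) / 2)) +
    (1 - 3 * ν ^ 2) / 24 * Real.log (1 + 1 / ((n : ℝ) + 1)) -
    ν / 2 * Real.log ((n : ℝ) + (1 + ν) / 2) - Real.log (2 * Real.pi) / 2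

-- Stirling's formula at `Γ(y + m)`, with `m = (1 + ν) / 2` and `y = n + m`, leaves the tail
-- `B₂(m) / (2 y) = -(1 - 3 ν²) / 24 / y`, which the factor `log (1 + 1 / (n + 1))` compensates.
lemma summable_summand (ν : ℝ) : Summable (summand ν) := by
  have hGamma := ((logGamma_add_sub_stirlingApprox_isBigO ((1 + ν) / 2)).comp_tendsto
    (tendsto_atTop_add_const_right _ ((1 + ν) / 2) tendsto_id)).trans
      ((add_const_isEquivalent ((1 + ν) / 2)).pow 2).inv.isBigO
  have hsum := (hGamma.add ((log_one_add_one_div_sub_isBigO ((1 + ν) / 2)).const_mul_left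
    ((1 - 3 * ν ^ 2) / 24))).comp_tendsto tendsto_natCast_atTop_atTop
  refine summable_of_isBigO_nat (Real.summable_nat_pow_inv.2 one_lt_two)
    (hsum.congr_left fun n => ?_)
  have hshift : (n : ℝ) + (1 + ν) / 2 + (1 + ν) / 2 = 1 + ν + n := by ring
  simp only [Function.comp_apply, id, summand, stirlingApprox, bernoulliTwo_one_add_div_two,
    hshift]
  generalize hy : (n : ℝ) + (1 + ν) / 2 = y
  linear_combination (-Real.log y) * hy

lemma sum_logGamma_add {a : ℝ} (ha : 0 < a) (N : ℕ) :
    ∑ n ∈ Finset.range N, Real.log (Real.Gamma (a + n))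
      = N * Real.log (Real.Gamma (a + N))
        - ∑ n ∈ Finset.range N, ((n : ℝ) + 1) * Real.log (a + n) := by
  induction N with
  | zero => simp
  | succ N ih =>
    rw [Finset.sum_range_succ, Finset.sum_range_succ, ih, Nat.cast_add_one, ← add_assoc,
      logGamma_add_one (by positivity)]
    ring

lemma sum_log_add {a : ℝ} (ha : 0 < a) (N : ℕ) :
    ∑ n ∈ Finset.range N, Real.log (a + n)
      = Real.log (Real.Gamma (a + N)) - Real.log (Real.Gamma a) :=
  eq_sub_of_add_eq' <|
    (Real.BohrMollerup.f_add_nat_eq (f := Real.log ∘ Real.Gamma) logGamma_add_one ha N).symm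

lemma sum_log_one_add_one_div (N : ℕ) :
    ∑ n ∈ Finset.range N, Real.log (1 + 1 / ((n : ℝ) + 1)) = Real.log (N + 1) := by
  have hstep (n : ℕ) : Real.log (1 + 1 / ((n : ℝ) + 1))
      = Real.log ((n + 1 : ℕ) + 1) - Real.log (n + 1) := by
    rw [← Real.log_div (by positivity) (by positivity)]
    congr 1
    field_simp
    push_cast
    ring
  rw [Finset.sum_congr rfl fun n _ => hstep n,
    Finset.sum_range_sub (fun n : ℕ => Real.log ((n : ℝ) + 1))]
  simp

lemma sum_add_natCast (a : ℝ) (N : ℕ) :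
    ∑ n ∈ Finset.range N, (a + n) = a * N + N * (N - 1) / 2 := by
  induction N with
  | zero => simp
  | succ N ih =>
    rw [Finset.sum_range_succ, ih]
    push_cast
    ring

lemma tendsto_logGamma_add_sub_stirlingApprox (c : ℝ) :
    Tendsto (fun N : ℕ => Real.log (Real.Gamma (N + c)) - stirlingApprox c N) atTop (𝓝 0) :=
  ((logGamma_add_sub_stirlingApprox_isBigO c).trans_tendsto
    (tendsto_pow_atTop two_ne_zero).inv_tendsto_atTop).comp tendsto_natCast_atTop_atTop

lemma tendsto_mul_logGamma_add_sub_stirlingApprox (c : ℝ) :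
    Tendsto (fun N : ℕ => N * (Real.log (Real.Gamma (N + c)) - stirlingApprox c N))
      atTop (𝓝 0) := by
  have h := (isBigO_refl (fun x : ℝ => x) atTop).mul (logGamma_add_sub_stirlingApprox_isBigO c)
  refine ((h.trans_eventuallyEq ?_).trans_tendsto tendsto_inv_atTop_zero).comp
    tendsto_natCast_atTop_atTop
  filter_upwards [eventually_gt_atTop 0] with x hx
  field_simp

lemma tendsto_approx_defects_zero (ν : ℝ) :
    Tendsto (fun N : ℕ =>
      N * (Real.log (Real.Gamma (N + (1 + ν))) - stirlingApprox (1 + ν) N)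
        - ν / 2 * (Real.log (Real.Gamma (N + (1 + ν) / 2)) - stirlingApprox ((1 + ν) / 2) N)
        + (1 - 3 * ν ^ 2) / 24 * (Real.log (N + 1) - Real.log N)
        - ν / 4 * bernoulliTwo ((1 + ν) / 2) / N) atTop (𝓝 0) := by
  simpa using (((tendsto_mul_logGamma_add_sub_stirlingApprox (1 + ν)).sub
    ((tendsto_logGamma_add_sub_stirlingApprox ((1 + ν) / 2)).const_mul (ν / 2))).add
      (Real.tendsto_log_nat_add_one_sub_log.const_mul ((1 - 3 * ν ^ 2) / 24))).sub
        (tendsto_const_div_atTop_nhds_zero_nat (ν / 4 * bernoulliTwo ((1 + ν) / 2)))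

section Evaluation

variable {ν : ℝ} (hν : -1 < ν)
include hν

lemma sum_mul_log_one_add (N : ℕ) :
    ∑ n ∈ Finset.range N, ((n : ℝ) + 1) * Real.log (1 + ν + n)
      = ∑ n ∈ Finset.range N, (1 + n) * Real.log (1 + n)
        + ∑ n ∈ Finset.range N, ((n : ℝ) + 1) * Real.log (1 + ν / ((n : ℝ) + 1)) := by
  rw [← Finset.sum_add_distrib]
  refine Finset.sum_congr rfl fun n _ => ?_
  have hn : (0 : ℝ) < n + 1 := by positivity
  have hsplit : 1 + ν / ((n : ℝ) + 1) = (1 + ν + n) / (n + 1) := by field_simp; ring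
  rw [hsplit, Real.log_div (by linarith [n.cast_nonneg (α := ℝ)]) hn.ne', add_comm (n : ℝ)]
  ring

lemma sum_summand (N : ℕ) :
    ∑ n ∈ Finset.range N, summand ν n = N * Real.log (Real.Gamma (1 + ν + N))
      - ∑ n ∈ Finset.range N, (1 + n) * Real.log (1 + n)
      - ∑ n ∈ Finset.range N, ((n : ℝ) + 1) * Real.log (1 + ν / ((n : ℝ) + 1))
      + ((1 + ν) / 2 * N + N * (N - 1) / 2)
      - ∑ n ∈ Finset.range N, ((1 + ν) / 2 + n) * Real.log ((1 + ν) / 2 + n)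
      + (1 - 3 * ν ^ 2) / 24 * Real.log (N + 1)
      - ν / 2 * (Real.log (Real.Gamma ((1 + ν) / 2 + N)) - Real.log (Real.Gamma ((1 + ν) / 2)))
      - N * (Real.log (2 * Real.pi) / 2) := by
  have hm : 0 < (1 + ν) / 2 := by linarith
  have hterm (n : ℕ) : summand ν n = Real.log (Real.Gamma (1 + ν + n)) + ((1 + ν) / 2 + n)
      - ((1 + ν) / 2 + n) * Real.log ((1 + ν) / 2 + n)
      + (1 - 3 * ν ^ 2) / 24 * Real.log (1 + 1 / ((n : ℝ) + 1))
      - ν / 2 * Real.log ((1 + ν) / 2 + n) - Real.log (2 * Real.pi) / 2 := by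
    rw [summand, add_comm (n : ℝ) ((1 + ν) / 2)]
    ring
  rw [Finset.sum_congr rfl fun n _ => hterm n, Finset.sum_sub_distrib, Finset.sum_sub_distrib,
    Finset.sum_add_distrib, Finset.sum_sub_distrib, Finset.sum_add_distrib, ← Finset.mul_sum,
    ← Finset.mul_sum, sum_logGamma_add (by linarith), sum_mul_log_one_add hν, sum_add_natCast,
    sum_log_one_add_one_div, sum_log_add hm, Finset.sum_const, Finset.card_range, nsmul_eq_mul]
  ring

lemma sum_summand_eq_approx_defects {N : ℕ} (hN : N ≠ 0) :
    ∑ n ∈ Finset.range N, summand ν n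
      = (logHyperfactorialApprox 1 N - ∑ n ∈ Finset.range N, (1 + n) * Real.log (1 + n))
        + (logHyperfactorialApprox ((1 + ν) / 2) N
          - ∑ n ∈ Finset.range N, ((1 + ν) / 2 + n) * Real.log ((1 + ν) / 2 + n))
        - (∑ n ∈ Finset.range N, ((n : ℝ) + 1) * Real.log (1 + ν / ((n : ℝ) + 1))
          - ν * N + ν ^ 2 / 2 * Real.log N + ν / 2 * Real.log (2 * Real.pi) - (ν + ν ^ 2) / 2)
        + (N * (Real.log (Real.Gamma (N + (1 + ν))) - stirlingApprox (1 + ν) N)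
          - ν / 2 * (Real.log (Real.Gamma (N + (1 + ν) / 2)) - stirlingApprox ((1 + ν) / 2) N)
          + (1 - 3 * ν ^ 2) / 24 * (Real.log (N + 1) - Real.log N)
          - ν / 4 * bernoulliTwo ((1 + ν) / 2) / N)
        + (ν / 2 * Real.log (Real.Gamma ((1 + ν) / 2)) + ν / 4 * Real.log (2 * Real.pi)
          + (1 - 3 * ν ^ 2) / 24) := by
  have hN' : (N : ℝ) ≠ 0 := by exact_mod_cast hN
  rw [sum_summand hν, add_comm (N : ℝ) (1 + ν), add_comm (N : ℝ) ((1 + ν) / 2)]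
  simp only [logHyperfactorialApprox, stirlingApprox, bernoulliTwo]
  field_simp
  ring

lemma tsum_summand :
    ((∑' n, summand ν n : ℝ) : ℂ) = deriv riemannZeta (-1) + deriv (hurwitzZetaR ((1 + ν) / 2)) (-1)
      - ((logBarnesG1p ν : ℝ) : ℂ)
      + ((ν / 2 * Real.log (Real.Gamma ((1 + ν) / 2)) + ν / 4 * Real.log (2 * Real.pi)
          + (1 - 3 * ν ^ 2) / 24 : ℝ) : ℂ) := by
  have hzeta := tendsto_logHyperfactorialApprox_sub_sum one_pos
  rw [deriv_hurwitzZetaR_one] at hzeta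
  have hhurwitz := tendsto_logHyperfactorialApprox_sub_sum (by linarith : 0 < (1 + ν) / 2)
  have hbarnes := (tendsto_sum_mul_log_one_add_div ν).ofReal
  have hdefects := (tendsto_approx_defects_zero ν).ofReal
  have hsum := (summable_summand ν).hasSum.tendsto_sum_nat.ofReal
  have hlim := (((hzeta.add hhurwitz).sub hbarnes).add hdefects).add_const
    ((ν / 2 * Real.log (Real.Gamma ((1 + ν) / 2)) + ν / 4 * Real.log (2 * Real.pi)
      + (1 - 3 * ν ^ 2) / 24 : ℝ) : ℂ)
  rw [ofReal_zero, add_zero] at hlim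
  refine tendsto_nhds_unique (hsum.congr' ?_) hlim
  filter_upwards [eventually_ne_atTop 0] with N hN
  rw [sum_summand_eq_approx_defects hν hN]
  simp only [ofReal_add, ofReal_sub]

end Evaluation

end X2rc

theorem X2rc_series_evaluation_general (ν : ℝ) (hν : -1 < ν) :
    Summable (X2rc.summand ν) ∧
    ((∑' n, X2rc.summand ν n : ℝ) : ℂ) =
      ((ν / 2 * Real.log (Real.Gamma ((1 + ν) / 2)) : ℝ) : ℂ) -
        ((logBarnesG1p ν : ℝ) : ℂ) + deriv riemannZeta (-1) +
        ((ν / 4 * Real.log (2 * Real.pi) : ℝ) : ℂ) - (((3 * ν ^ 2 - 1) / 24 : ℝ) : ℂ) +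
        deriv (hurwitzZetaR ((1 + ν) / 2 + 1)) (-1) -
        (((1 + ν) / 2 * Real.log ((1 + ν) / 2) : ℝ) : ℂ) := by
  refine ⟨X2rc.summable_summand ν, ?_⟩
  rw [X2rc.tsum_summand hν, X2rc.deriv_hurwitzZetaR_add_one (by linarith)]
  push_cast
  ring

/-- evaluation of the series `X_{2,r}^{(c)}`. -/
theorem X2rc_series_evaluation (ν : ℝ) (hν : 0 ≤ ν) :
    Summable (fun n : ℕ =>
      Real.log (Real.Gamma (1 + ν + n)) +
        ((n : ℝ) + (1 + ν) / 2) * (1 - Real.log ((n : ℝ) + (1 + ν) / 2)) +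
        (1 - 3 * ν ^ 2) / 24 * Real.log (1 + 1 / ((n : ℝ) + 1)) -
        ν / 2 * Real.log ((n : ℝ) + (1 + ν) / 2) - Real.log (2 * Real.pi) / 2) ∧
    ((∑' n : ℕ,
        (Real.log (Real.Gamma (1 + ν + n)) +
          ((n : ℝ) + (1 + ν) / 2) * (1 - Real.log ((n : ℝ) + (1 + ν) / 2)) +
          (1 - 3 * ν ^ 2) / 24 * Real.log (1 + 1 / ((n : ℝ) + 1)) -
          ν / 2 * Real.log ((n : ℝ) + (1 + ν) / 2) - Real.log (2 * Real.pi) / 2) : ℝ) : ℂ) =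
      ((ν / 2 * Real.log (Real.Gamma ((1 + ν) / 2)) : ℝ) : ℂ) -
        ((logBarnesG1p ν : ℝ) : ℂ) + deriv riemannZeta (-1) +
        ((ν / 4 * Real.log (2 * Real.pi) : ℝ) : ℂ) - (((3 * ν ^ 2 - 1) / 24 : ℝ) : ℂ) +
        deriv (hurwitzZetaR ((1 + ν) / 2 + 1)) (-1) -
        (((1 + ν) / 2 * Real.log ((1 + ν) / 2) : ℝ) : ℂ) :=
  X2rc_series_evaluation_general ν (by linarith)
end
end
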